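/- Let S be a semioval of size q − 1 + a in PG(2,q) with a > 2. Suppose that S has two a-secants ℓ₁ and ℓ₂, with nuclei N₁ and N₂ respectively, and let S' = S∖(ℓ₁ ∪ ℓ₂). Then N₁ ∈ ℓ₂, N₂ ∈ ℓ₁, the tangents to S through the points of S' all pass through the point ℓ₁ ∩ ℓ₂, and one of the following holds: (1) S is the symmetric difference of ℓ₁ and ℓ₂ with one further point removed from both lines; (2) S is projectively equivalent to the Blokhuis semioval; (3) for each R ∈ S' there are at least three lines through R meeting S in at least three points, and q ≤ a + 1 + (a − 2)²(a − 3)²/6. -/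

import Mathlib

/-! Common setup: the Desarguesian projective plane `PG(2,q)` over a finite field `F = GF(q)`.
Points are the projective points of `F³`; lines are the 2-dimensional linear subspaces of `F³`,
with incidence given by containment. -/

/-- Points of `PG(2,F)`. -/
abbrev PGPoint (F : Type*) [Field F] := Projectivization F (Fin 3 → F)

/-- Lines of `PG(2,F)`: the 2-dimensional linear subspaces of `F³`. -/
abbrev PGLine (F : Type*) [Field F] := {W : Submodule F (Fin 3 → F) // Module.finrank F W = 2}

/-- Incidence between a point and a line of `PG(2,F)`. -/
def pgMem {F : Type*} [Field F] (P : PGPoint F) (L : PGLine F) : Prop :=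
  P.submodule ≤ L.val

/-- The number of points of the point set `B` lying on the line `L`;
`L` is a *`k`-secant* of `B` if `nsec B L = k`, a *tangent* if `k = 1`,
a *bisecant* if `k = 2` and a *trisecant* if `k = 3`. -/
noncomputable def nsec {F : Type*} [Field F] (B : Set (PGPoint F)) (L : PGLine F) : ℕ :=
  {P ∈ B | pgMem P L}.ncard

/-- A blocking set: a point set meeting every line. -/
def isBlocking {F : Type*} [Field F] (B : Set (PGPoint F)) : Prop :=
  ∀ L : PGLine F, ∃ P ∈ B, pgMem P L

/-- A minimal blocking set: every point is essential. -/
def isMinimalBlocking {F : Type*} [Field F] (B : Set (PGPoint F)) : Prop :=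
  isBlocking B ∧ ∀ P ∈ B, ¬ isBlocking (B \ {P})

/-- `B` is a blocking set of Rédei type with Rédei line `ℓ`: a blocking set of size
`q + N ≤ 2q` such that `ℓ` meets `B` in exactly `N = |B| − q` points. -/
def isRedeiWithLine {F : Type*} [Field F] (q : ℕ) (B : Set (PGPoint F)) (ℓ : PGLine F) : Prop :=
  isBlocking B ∧ B.ncard ≤ 2 * q ∧ nsec B ℓ + q = B.ncard

/-- A semioval: through each of its points there passes exactly one tangent. -/
def isSemioval {F : Type*} [Field F] (S : Set (PGPoint F)) : Prop :=
  ∀ P ∈ S, ∃! t : PGLine F, pgMem P t ∧ nsec S t = 1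

/-- A vector of `F³` with some coordinate equal to `1` is nonzero. -/
lemma vec_ne_zero_of_coord_one {F : Type*} [Field F] (v : Fin 3 → F) (i : Fin 3)
    (hvi : v i = 1) : v ≠ 0 := by
  intro h0; rw [h0] at hvi; simp at hvi

/-- The Blokhuis semioval in `PG(2,q)`, `q` odd: the point set
`{(0,1,s), (s,0,1), (1,s,0) : −s is not a square in GF(q)}` (homogeneous coordinates). -/
def blokhuisSemioval (F : Type*) [Field F] : Set (PGPoint F) :=
  {P : PGPoint F | ∃ s : F, ¬ IsSquare (-s) ∧
    (P = Projectivization.mk F ![0, 1, s] (vec_ne_zero_of_coord_one _ 1 rfl) ∨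
     P = Projectivization.mk F ![s, 0, 1] (vec_ne_zero_of_coord_one _ 2 rfl) ∨
     P = Projectivization.mk F ![1, s, 0] (vec_ne_zero_of_coord_one _ 0 rfl))}

/-- Two point sets of `PG(2,q)` are projectively equivalent if one is the image of the other
under an element of `PGL(3,q)`, i.e. under the map induced by an invertible linear map of `F³`. -/
def projEquivalent {F : Type*} [Field F] (A B : Set (PGPoint F)) : Prop :=
  ∃ g : (Fin 3 → F) ≃ₗ[F] (Fin 3 → F),
    Projectivization.map (σ := RingHom.id F) g.toLinearMap g.injective '' A = B

/-- `S` is the symmetric difference of two lines with one further point removed from both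
lines. -/
def isSymmDiffOfTwoLinesMinusTwoPoints {F : Type*} [Field F] (S : Set (PGPoint F))
    (ℓ₁ ℓ₂ : PGLine F) : Prop :=
  ℓ₁ ≠ ℓ₂ ∧ ∃ P₁ P₂ : PGPoint F,
    pgMem P₁ ℓ₁ ∧ ¬ pgMem P₁ ℓ₂ ∧ pgMem P₂ ℓ₂ ∧ ¬ pgMem P₂ ℓ₁ ∧
    S = (({P | pgMem P ℓ₁} \ {P | pgMem P ℓ₂}) ∪ ({P | pgMem P ℓ₂} \ {P | pgMem P ℓ₁}))
        \ {P₁, P₂}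

section

open Polynomial Lagrange

section NodalPolynomials

variable {F ι : Type*} [Field F]

/-- A polynomial of degree at most `#s` vanishing at all nodes is a multiple of `nodal s v`. -/
lemma eq_C_mul_nodal {s : Finset ι} {v : ι → F} (hv : Set.InjOn v s) {Q : F[X]}
    (hdeg : Q.natDegree ≤ s.card) (h0 : ∀ i ∈ s, Q.eval (v i) = 0) :
    Q = C (Q.coeff s.card) * nodal s v := by
  refine eq_of_degree_sub_lt_of_eval_index_eq s hv ?_ ?_
  · rw [degree_lt_iff_coeff_zero]
    intro k hk
    rcases hk.eq_or_lt with rfl | hk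
    · have h1 : (nodal s v).coeff s.card = 1 := by
        have := (nodal_monic (s := s) (v := v)).coeff_natDegree
        rwa [natDegree_nodal] at this
      simp [h1]
    · have h1 : (nodal s v).coeff k = 0 :=
        coeff_eq_zero_of_natDegree_lt (by rwa [natDegree_nodal])
      simp [coeff_eq_zero_of_natDegree_lt (hdeg.trans_lt hk), h1]
  · intro i hi
    simp [h0 i hi, eval_nodal_at_node hi]

lemma coeff_card_sub_one_nodal {s : Finset ι} (v : ι → F) (hs : 0 < s.card) :
    (nodal s v).coeff (s.card - 1) = -∑ i ∈ s, v i := by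
  rw [← prod_X_sub_C_nextCoeff, ← nodal_eq, nextCoeff_of_natDegree_pos, natDegree_nodal]
  rwa [natDegree_nodal]

lemma nodal_derivative_ne_zero [DecidableEq ι] {s : Finset ι} {v : ι → F} (hv : Set.InjOn v s)
    {i : ι} (hi : i ∈ s) : (derivative (nodal s v)).eval (v i) ≠ 0 := by
  rw [eval_nodal_derivative_eval_node_eq hi, eval_nodal, Finset.prod_ne_zero_iff]
  intro j hj h
  rw [Finset.mem_erase] at hj
  exact hj.1 (hv hj.2 hi (sub_eq_zero.1 h).symm)

/-- If `x * E'(x)` is a nonzero constant on the roots of `E = ∏ (X - d)`, then the roots of `E`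
sum to zero and their number is nonzero in the field. -/
lemma sum_eq_zero_of_mul_derivative_const {D : Finset F} (hD : 1 < D.card) {c : F} (hc : c ≠ 0)
    (h : ∀ d ∈ D, d * (derivative (nodal D id)).eval d = c) :
    (D.card : F) ≠ 0 ∧ ∑ d ∈ D, d = 0 := by
  set E := nodal D (id : F → F) with hE
  have hnat : E.natDegree = D.card := natDegree_nodal
  have hlead : E.coeff D.card = 1 := by
    have := (nodal_monic (s := D) (v := (id : F → F))).coeff_natDegree
    rwa [natDegree_nodal] at this
  have hcoeff : ∀ k, (X * derivative E - C c).coeff (k + 1) = E.coeff (k + 1) * (k + 1) := by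
    intro k
    rw [coeff_sub, coeff_X_mul, coeff_derivative, coeff_C_succ, sub_zero]
  have hcard : D.card = (D.card - 1) + 1 := by omega
  have key := eq_C_mul_nodal (s := D) (v := id) Function.injective_id.injOn
    (Q := X * derivative E - C c) (by
      refine natDegree_le_iff_coeff_eq_zero.2 fun k hk => ?_
      obtain ⟨j, rfl⟩ : ∃ j, k = j + 1 := ⟨k - 1, by omega⟩
      rw [hcoeff, coeff_eq_zero_of_natDegree_lt (by omega), zero_mul])
    (by intro d hd; simpa [sub_eq_zero] using h d hd)
  have hκ : (X * derivative E - C c).coeff D.card = (D.card : F) := by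
    rw [hcard, hcoeff, ← hcard, hlead, one_mul]
    conv_rhs => rw [hcard]
    push_cast; rfl
  rw [hκ, ← hE] at key
  constructor
  · intro h0
    rw [h0] at key
    have := congrArg (eval 0) key
    simp at this
    exact hc this
  · have h1 := congrArg (fun Q => coeff Q (D.card - 1)) key
    obtain ⟨j, hj⟩ : ∃ j, D.card - 1 = j + 1 := ⟨D.card - 2, by omega⟩
    simp only [coeff_C_mul] at h1
    rw [hj, hcoeff, ← hj, hE, coeff_card_sub_one_nodal _ (by omega)] at h1
    have h2 : (D.card : F) = (j : F) + 1 + 1 := by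
      rw [hcard, hj]; push_cast; rfl
    rw [h2] at h1
    simp only [id] at h1
    linear_combination h1

/-- If `E'` is constant on the roots of `E = ∏ (X - d)`, then the number of roots vanishes in the
field. -/
lemma card_eq_zero_of_derivative_const {D : Finset F} (hD : 1 < D.card) {c : F}
    (h : ∀ d ∈ D, (derivative (nodal D id)).eval d = c) : (D.card : F) = 0 := by
  set E := nodal D (id : F → F) with hE
  have hnat : E.natDegree = D.card := natDegree_nodal
  have hlead : E.coeff D.card = 1 := by
    have := (nodal_monic (s := D) (v := (id : F → F))).coeff_natDegree
    rwa [natDegree_nodal] at this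
  have key : derivative E = C c := by
    refine eq_of_degree_sub_lt_of_eval_index_eq D (v := id) Function.injective_id.injOn ?_ ?_
    · rw [degree_lt_iff_coeff_zero]
      intro k hk
      rw [coeff_sub, coeff_derivative, coeff_eq_zero_of_natDegree_lt (by omega),
        coeff_C_of_ne_zero (by omega)]
      simp
    · intro d hd
      simpa using h d hd
  have h1 := congrArg (fun Q => coeff Q (D.card - 1)) key
  have hcard : D.card - 1 + 1 = D.card := by omega
  simp only [coeff_derivative] at h1
  rw [hcard, hlead, coeff_C_of_ne_zero (by omega), one_mul] at h1
  rw [← hcard]; push_cast; exact h1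

variable [Fintype F]

lemma prod_erase_sub_eq_neg_one [DecidableEq F] (r : F) :
    ∏ s ∈ Finset.univ.erase r, (r - s) = -1 := by
  have h := congrArg Units.val (FiniteField.prod_univ_units_id_eq_neg_one (K := F))
  rw [Units.coe_prod, Units.val_neg, Units.val_one] at h
  rw [← h]
  symm
  refine Finset.prod_bij (fun u _ => r - (u : F)) ?_ ?_ ?_ ?_
  · intro u _; simp
  · intro u _ w _ h; exact Units.ext (by simpa using h)
  · intro s hs
    exact ⟨Units.mk0 (r - s) (sub_ne_zero.2 (Finset.ne_of_mem_erase hs).symm), by simp⟩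
  · intro u _; simp

lemma injOn_of_surj_compl {F ι : Type*} [Fintype F] [DecidableEq F] {A : Finset ι} {φ : ι → F}
    {t : F}
    (hcard : A.card + 1 = Fintype.card F) (h : ∀ s, s ≠ t ↔ ∃ i ∈ A, φ i = s) :
    A.image φ = Finset.univ.erase t ∧ Set.InjOn φ A := by
  have himg : A.image φ = Finset.univ.erase t := by
    ext s; simp [h s]
  refine ⟨himg, Finset.card_image_iff.1 ?_⟩
  rw [himg, Finset.card_erase_of_mem (Finset.mem_univ _), Finset.card_univ]
  omega

/-- If `φ` maps the `q - 1` elements of `A` onto the complement of `t`, then the product of the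
differences of `φ j` with all other values, including `t`, is `-1`. -/
lemma prod_sub_mul_sub_eq_neg_one [DecidableEq ι] {A : Finset ι} {φ : ι → F} {t : F}
    (hcard : A.card + 1 = Fintype.card F) (h : ∀ s, s ≠ t ↔ ∃ i ∈ A, φ i = s) {j : ι}
    (hj : j ∈ A) : (∏ i ∈ A.erase j, (φ j - φ i)) * (φ j - t) = -1 := by
  classical
  obtain ⟨himg, hinj⟩ := injOn_of_surj_compl hcard h
  have hjt : φ j ≠ t := (h _).2 ⟨j, hj, rfl⟩
  rw [← prod_erase_sub_eq_neg_one (φ j),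
    ← Finset.mul_prod_erase (Finset.univ.erase (φ j)) _ (a := t) (by simp [hjt.symm]), mul_comm]
  congr 1
  rw [Finset.erase_right_comm, ← himg,
    ← Finset.prod_image (s := A.erase j) (g := φ) (f := fun s => φ j - s)]
  · congr 1
    ext s
    simp only [Finset.mem_image, Finset.mem_erase]
    constructor
    · rintro ⟨i, ⟨hij, hi⟩, rfl⟩
      exact ⟨fun h => hij (hinj hi hj h), i, hi, rfl⟩
    · rintro ⟨hs, i, hi, rfl⟩
      exact ⟨i, ⟨fun h => hs (h ▸ rfl), hi⟩, rfl⟩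
  · exact fun x hx y hy hxy => hinj (Finset.mem_of_mem_erase hx) (Finset.mem_of_mem_erase hy) hxy

/-- Comparing derivatives at a root of `E` in `E * G = (X ^ q - X) * ex`. -/
lemma derivative_eval_mul_eval_eq_neg {E G ex : F[X]}
    (h : E * G = (X ^ Fintype.card F - X) * ex) {d : F} (hd : E.eval d = 0) :
    (derivative E).eval d * G.eval d = -ex.eval d := by
  have := congrArg (fun Q => (derivative Q).eval d) h
  simpa [derivative_mul, hd, FiniteField.pow_card, derivative_X_pow] using this

lemma X_pow_card_sub_X_dvd {Q : F[X]} (h : ∀ s, Q.eval s = 0) :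
    (X ^ Fintype.card F - X) ∣ Q := by
  by_cases hQ : Q = 0
  · simp [hQ]
  have h1 : 1 < Fintype.card F := Fintype.one_lt_card
  have hsplit : (X ^ Fintype.card F - X : F[X]).Splits := by
    rw [splits_iff_card_roots, FiniteField.roots_X_pow_card_sub_X,
      FiniteField.X_pow_card_sub_X_natDegree_eq F h1]
    rfl
  refine (hsplit.dvd_iff_roots_le_roots (FiniteField.X_pow_card_sub_X_ne_zero F h1) hQ).2 ?_
  rw [FiniteField.roots_X_pow_card_sub_X]
  exact (Multiset.le_iff_subset Finset.univ.nodup).2 fun s _ => (mem_roots hQ).2 (h s)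

end NodalPolynomials

section Configuration

variable {F : Type*} [Field F] [Fintype F]

/-- Coordinate form of the hypotheses: `D` is the set of slopes of the points on the line at
infinity, `B` the set of ordinates of the points on the line `x = 0`, and `T` the set of remaining
(affine) points. The tangents at the points of `D` pass through `(n₁, n₂)`, the tangent at `(0, b)`
has slope `m b`, and the tangent at a point of `T` is vertical (`none`) or has a slope (`some s`). -/
structure TwoSecantConfig (a : ℕ) (D B : Finset F) (T : Finset (F × F)) (n₁ n₂ : F) (m : F → F) :
    Prop where
  two_lt : 2 < a
  cardD : D.card = a
  cardB : B.card = a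
  cardT : T.card + a + 1 = Fintype.card F
  fst_ne : ∀ u ∈ T, u.1 ≠ 0
  tanD : ∀ d ∈ D, ∀ s, s ≠ n₂ - d * n₁ ↔ (s ∈ B ∨ ∃ u ∈ T, u.2 - d * u.1 = s)
  tanB : ∀ b ∈ B, ∀ s, s ≠ m b ↔ (s ∈ D ∨ ∃ u ∈ T, u.2 - s * u.1 = b)
  tanT : ∀ R ∈ T, ∃ o : Option F, (o ≠ none ↔ ∃ u ∈ T, u ≠ R ∧ u.1 = R.1) ∧
    ∀ s, (o ≠ some s ↔
      (s ∈ D ∨ R.2 - s * R.1 ∈ B ∨ ∃ u ∈ T, u ≠ R ∧ u.2 - s * u.1 = R.2 - s * R.1))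

namespace TwoSecantConfig

variable {a : ℕ} {D B : Finset F} {T : Finset (F × F)} {n₁ n₂ : F} {m : F → F}

/-- The map sending a point of `B` or `T` to the intercept of its line of slope `d`. -/
def intercept (d : F) : F ⊕ F × F → F := Sum.elim id fun u => u.2 - d * u.1

/-- The map sending a point of `D` or `T` to the slope of its line through `(0, b)`. -/
def slopeFrom (b : F) : F ⊕ F × F → F := Sum.elim id fun u => (u.2 - b) / u.1

lemma intercept_surj (h : TwoSecantConfig a D B T n₁ n₂ m) {d : F} (hd : d ∈ D) (s : F) :
    s ≠ n₂ - d * n₁ ↔ ∃ i ∈ B.disjSum T, intercept d i = s := by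
  rw [h.tanD d hd]
  simp [intercept]

lemma slopeFrom_surj (h : TwoSecantConfig a D B T n₁ n₂ m) {b : F} (hb : b ∈ B) (s : F) :
    s ≠ m b ↔ ∃ i ∈ D.disjSum T, slopeFrom b i = s := by
  have key : ∀ u ∈ T, u.2 - s * u.1 = b ↔ (u.2 - b) / u.1 = s := fun u hu => by
    rw [div_eq_iff (h.fst_ne u hu), sub_eq_iff_eq_add, sub_eq_iff_eq_add, add_comm]
  rw [h.tanB b hb]
  simp only [Finset.mem_disjSum, slopeFrom]
  constructor
  · rintro (hs | ⟨u, hu, hus⟩)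
    · exact ⟨Sum.inl s, Or.inl ⟨s, hs, rfl⟩, rfl⟩
    · exact ⟨Sum.inr u, Or.inr ⟨u, hu, rfl⟩, (key u hu).1 hus⟩
  · rintro ⟨i, ⟨d, hd, rfl⟩ | ⟨u, hu, rfl⟩, rfl⟩
    · exact Or.inl hd
    · exact Or.inr ⟨u, hu, (key u hu).2 rfl⟩

lemma card_disjSum_B (h : TwoSecantConfig a D B T n₁ n₂ m) :
    (B.disjSum T).card + 1 = Fintype.card F := by
  rw [Finset.card_disjSum, h.cardB, ← h.cardT]; ring

lemma card_disjSum_D (h : TwoSecantConfig a D B T n₁ n₂ m) :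
    (D.disjSum T).card + 1 = Fintype.card F := by
  rw [Finset.card_disjSum, h.cardD, ← h.cardT]; ring

lemma intercept_notMem_B (h : TwoSecantConfig a D B T n₁ n₂ m) {d : F} (hd : d ∈ D) {R : F × F}
    (hR : R ∈ T) : R.2 - d * R.1 ∉ B := by
  classical
  intro hb
  have hinj := (injOn_of_surj_compl h.card_disjSum_B (h.intercept_surj hd)).2
  have : (Sum.inl (R.2 - d * R.1) : F ⊕ F × F) = Sum.inr R :=
    hinj (by simpa using hb) (by simpa using hR) rfl
  cases this

lemma mem_B_prod_eq [DecidableEq F] (h : TwoSecantConfig a D B T n₁ n₂ m) {d b : F} (hd : d ∈ D)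
    (hb : b ∈ B) : (∏ b' ∈ B.erase b, (b - b')) * (∏ u ∈ T, (b - (u.2 - d * u.1))) *
      (b - (n₂ - d * n₁)) = -1 := by
  have := prod_sub_mul_sub_eq_neg_one h.card_disjSum_B (h.intercept_surj hd)
    (j := Sum.inl b) (by simpa using hb)
  rw [← this]
  have : (B.disjSum T).erase (Sum.inl b) = (B.erase b).disjSum T := by ext (x | x) <;> simp
  rw [this, Finset.prod_disjSum]
  rfl

lemma mem_T_prod_eq [DecidableEq F] (h : TwoSecantConfig a D B T n₁ n₂ m) {d : F} {R : F × F}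
    (hd : d ∈ D) (hR : R ∈ T) : (∏ b ∈ B, (R.2 - d * R.1 - b)) *
      (∏ u ∈ T.erase R, (R.2 - d * R.1 - (u.2 - d * u.1))) *
      (R.2 - d * R.1 - (n₂ - d * n₁)) = -1 := by
  have := prod_sub_mul_sub_eq_neg_one h.card_disjSum_B (h.intercept_surj hd)
    (j := Sum.inr R) (by simpa using hR)
  rw [← this]
  have : (B.disjSum T).erase (Sum.inr R) = B.disjSum (T.erase R) := by ext (x | x) <;> simp
  rw [this, Finset.prod_disjSum]
  rfl

lemma mem_D_prod_eq [DecidableEq F] (h : TwoSecantConfig a D B T n₁ n₂ m) {d b : F} (hd : d ∈ D)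
    (hb : b ∈ B) : (∏ d' ∈ D.erase d, (d - d')) * (∏ u ∈ T, (d - (u.2 - b) / u.1)) *
      (d - m b) = -1 := by
  have := prod_sub_mul_sub_eq_neg_one h.card_disjSum_D (h.slopeFrom_surj hb)
    (j := Sum.inl d) (by simpa using hd)
  rw [← this]
  have : (D.disjSum T).erase (Sum.inl d) = (D.erase d).disjSum T := by ext (x | x) <;> simp
  rw [this, Finset.prod_disjSum]
  rfl

lemma mem_T_prod_eq' [DecidableEq F] (h : TwoSecantConfig a D B T n₁ n₂ m) {b : F} {R : F × F}
    (hb : b ∈ B) (hR : R ∈ T) : (∏ d ∈ D, ((R.2 - b) / R.1 - d)) *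
      (∏ u ∈ T.erase R, ((R.2 - b) / R.1 - (u.2 - b) / u.1)) *
      ((R.2 - b) / R.1 - m b) = -1 := by
  have := prod_sub_mul_sub_eq_neg_one h.card_disjSum_D (h.slopeFrom_surj hb)
    (j := Sum.inr R) (by simpa using hR)
  rw [← this]
  have : (D.disjSum T).erase (Sum.inr R) = D.disjSum (T.erase R) := by ext (x | x) <;> simp
  rw [this, Finset.prod_disjSum]
  rfl

lemma slope_notMem (h : TwoSecantConfig a D B T n₁ n₂ m) {b : F} (hb : b ∈ B) : m b ∉ D :=
  fun hm => (h.tanB b hb (m b)).2 (Or.inl hm) rfl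

/-- The relation between the two families of tangents. -/
lemma derivative_relation (h : TwoSecantConfig a D B T n₁ n₂ m) {d b : F} (hd : d ∈ D)
    (hb : b ∈ B) :
    (derivative (nodal D id)).eval d * (d - m b) =
      (derivative (nodal B id)).eval b * (∏ u ∈ T, u.1) * (d * n₁ + b - n₂) := by
  classical
  have e1 := h.mem_B_prod_eq hd hb
  have e2 := h.mem_D_prod_eq hd hb
  have e3 : ∏ u ∈ T, (b - (u.2 - d * u.1)) =
      (∏ u ∈ T, u.1) * ∏ u ∈ T, (d - (u.2 - b) / u.1) := by
    rw [← Finset.prod_mul_distrib]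
    refine Finset.prod_congr rfl fun u hu => ?_
    have := h.fst_ne u hu
    field_simp
    ring
  have e4 := eval_nodal_derivative_eval_node_eq (v := (id : F → F)) hd
  have e5 := eval_nodal_derivative_eval_node_eq (v := (id : F → F)) hb
  simp only [id, eval_nodal] at e4 e5
  rw [e4, e5]
  rw [e3] at e1
  set p := ∏ u ∈ T, (d - (u.2 - b) / u.1)
  have hp : p ≠ 0 := by rintro h0; rw [h0] at e2; simp at e2
  apply mul_right_cancel₀ hp
  linear_combination e2 - e1

/-- The product of the linear forms, in the slope, of the points of `T` seen from `R`. -/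
noncomputable def pencil [DecidableEq F] (T : Finset (F × F)) (R : F × F) : F[X] :=
  ∏ u ∈ T.erase R, (C (u.1 - R.1) * X - C (u.2 - R.2))

/-- The nodal polynomial of the slopes of the lines joining `R` to the points of `B`. -/
noncomputable def slopesToB (B : Finset F) (R : F × F) : F[X] :=
  nodal B fun b => (R.2 - b) / R.1

lemma eval_pencil {F : Type*} [Field F] [DecidableEq F] (T : Finset (F × F)) (R : F × F) (s : F) :
    (pencil T R).eval s = ∏ u ∈ T.erase R, ((u.1 - R.1) * s - (u.2 - R.2)) := by
  simp [pencil, eval_prod]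

lemma natDegree_linear_form {F : Type*} [Field F] [DecidableEq F] (c e : F) (h : c ≠ 0 ∨ e ≠ 0) :
    C c * X - C e ≠ 0 ∧ (C c * X - C e).natDegree = if c = 0 then 0 else 1 := by
  by_cases hc : c = 0
  · have he := h.resolve_left (not_not.2 hc)
    simp [hc, he]
  · have : (C c * X - C e).natDegree = 1 := by
      rw [sub_eq_add_neg, ← C_neg]; exact natDegree_linear hc
    refine ⟨fun h0 => ?_, by simp [hc, this]⟩
    rw [h0] at this
    simp at this

lemma pencil_ne_zero_and_natDegree {F : Type*} [Field F] [DecidableEq F] (T : Finset (F × F)) (R : F × F) :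
    pencil T R ≠ 0 ∧
      (pencil T R).natDegree + ((T.erase R).filter fun u => u.1 = R.1).card = (T.erase R).card := by
  have hne : ∀ u ∈ T.erase R, u.1 - R.1 ≠ 0 ∨ u.2 - R.2 ≠ 0 := by
    intro u hu
    by_contra! hcon
    exact Finset.ne_of_mem_erase hu (Prod.ext (sub_eq_zero.1 hcon.1) (sub_eq_zero.1 hcon.2))
  refine ⟨Finset.prod_ne_zero_iff.2 fun u hu => (natDegree_linear_form _ _ (hne u hu)).1, ?_⟩
  rw [pencil, natDegree_prod _ _ fun u hu => (natDegree_linear_form _ _ (hne u hu)).1,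
    Finset.sum_congr rfl fun u hu => (natDegree_linear_form _ _ (hne u hu)).2]
  rw [← Finset.card_filter_add_card_filter_not (s := T.erase R) (fun u => u.1 = R.1), add_comm]
  congr 1
  rw [Finset.card_filter]
  refine Finset.sum_congr rfl fun u _ => ?_
  by_cases hu : u.1 = R.1 <;> simp [hu, sub_eq_zero]

/-- The excess polynomial of a point `R` of `T`. -/
lemma exists_excess [DecidableEq F] (h : TwoSecantConfig a D B T n₁ n₂ m) {R : F × F}
    (hR : R ∈ T) : ∃ M ex : F[X],
      pencil T R * nodal D id * slopesToB B R * M = (X ^ Fintype.card F - X) * ex ∧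
      M.natDegree ≤ 1 ∧ ex ≠ 0 ∧
      ex.natDegree + 2 + ((T.erase R).filter fun u => u.1 = R.1).card = a + M.natDegree ∧
      ex.natDegree + 2 ≤ a ∧
      ((M = 1 ∧ ((T.erase R).filter fun u => u.1 = R.1).card = 0) ∨ ∃ s, M = X - C s ∧
        (pencil T R * nodal D id * slopesToB B R).eval s ≠ 0) := by
  obtain ⟨o, hnone, hsome⟩ := h.tanT R hR
  have hx := h.fst_ne R hR
  have hzero : ∀ s, (pencil T R * nodal D id * slopesToB B R).eval s = 0 ↔ o ≠ some s := by
    intro s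
    rw [hsome, eval_mul, eval_mul, mul_eq_zero, mul_eq_zero, eval_pencil, slopesToB, eval_nodal,
      eval_nodal, Finset.prod_eq_zero_iff, Finset.prod_eq_zero_iff, Finset.prod_eq_zero_iff]
    constructor
    · rintro ((⟨u, hu, hus⟩ | ⟨d, hd, hds⟩) | ⟨b, hb, hbs⟩)
      · rw [Finset.mem_erase] at hu
        exact Or.inr (Or.inr ⟨u, hu.2, hu.1, by linear_combination -hus⟩)
      · rw [sub_eq_zero] at hds; simp only [id] at hds; exact Or.inl (hds ▸ hd)
      · have : R.2 - s * R.1 = b := by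
          rw [sub_eq_zero] at hbs; rw [hbs]; field_simp; ring
        exact Or.inr (Or.inl (this ▸ hb))
    · rintro (hs | hb | ⟨u, hu, huR, hus⟩)
      · exact Or.inl (Or.inr ⟨s, hs, by simp⟩)
      · exact Or.inr ⟨_, hb, by field_simp; ring⟩
      · exact Or.inl (Or.inl ⟨u, Finset.mem_erase.2 ⟨huR, hu⟩, by linear_combination -hus⟩)
  obtain ⟨hΦ, hΦdeg⟩ := pencil_ne_zero_and_natDegree T R
  set f := ((T.erase R).filter fun u => u.1 = R.1).card with hf
  have hE : nodal D (id : F → F) ≠ 0 := nodal_ne_zero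
  have hBt : slopesToB B R ≠ 0 := nodal_ne_zero
  have hEdeg : (nodal D (id : F → F)).natDegree = a := by rw [natDegree_nodal, h.cardD]
  have hBdeg : (slopesToB B R).natDegree = a := by rw [slopesToB, natDegree_nodal, h.cardB]
  have hTcard := Finset.card_erase_add_one hR
  have hcardT := h.cardT
  have hq : (X ^ Fintype.card F - X : F[X]).natDegree = Fintype.card F :=
    FiniteField.X_pow_card_sub_X_natDegree_eq F Fintype.one_lt_card
  have hq0 : (X ^ Fintype.card F - X : F[X]) ≠ 0 :=
    FiniteField.X_pow_card_sub_X_ne_zero F Fintype.one_lt_card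
  have main : ∀ M : F[X], M ≠ 0 →
      (∀ s, (pencil T R * nodal D id * slopesToB B R * M).eval s = 0) →
      ∃ ex : F[X], pencil T R * nodal D id * slopesToB B R * M = (X ^ Fintype.card F - X) * ex ∧
        ex ≠ 0 ∧ ex.natDegree + 2 + f = a + M.natDegree := by
    intro M hM hev
    obtain ⟨ex, hex⟩ := X_pow_card_sub_X_dvd hev
    have hex0 : ex ≠ 0 := by
      rintro rfl
      rw [mul_zero] at hex
      exact mul_ne_zero (mul_ne_zero (mul_ne_zero hΦ hE) hBt) hM hex
    refine ⟨ex, hex, hex0, ?_⟩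
    have hdeg := congrArg natDegree hex
    rw [natDegree_mul hq0 hex0, natDegree_mul (mul_ne_zero (mul_ne_zero hΦ hE) hBt) hM,
      natDegree_mul (mul_ne_zero hΦ hE) hBt, natDegree_mul hΦ hE, hEdeg, hBdeg, hq] at hdeg
    omega
  cases o with
  | none =>
    obtain ⟨ex, h1, h2, h3⟩ := main 1 one_ne_zero (fun s => by
      rw [mul_one]; exact (hzero s).2 (by simp))
    have hf0 : f = 0 := by
      rw [hf, Finset.card_eq_zero, Finset.filter_eq_empty_iff]
      intro u hu hux
      rw [Finset.mem_erase] at hu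
      exact hnone.2 ⟨u, hu.2, hu.1, hux⟩ rfl
    exact ⟨1, ex, h1, by simp, h2, h3, by simp at h3; omega, Or.inl ⟨rfl, hf0⟩⟩
  | some s =>
    obtain ⟨ex, h1, h2, h3⟩ := main (X - C s) (X_sub_C_ne_zero s) (fun t => by
      rw [eval_mul, mul_eq_zero]
      by_cases hst : t = s
      · right; simp [hst]
      · left; exact (hzero t).2 (by simpa using fun h => hst h.symm))
    have hfpos : 0 < f := by
      obtain ⟨u, hu, huR, hux⟩ := hnone.1 (by simp)
      exact Finset.card_pos.2 ⟨u, by simp [hu, huR, hux]⟩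
    rw [natDegree_X_sub_C] at h3
    refine ⟨X - C s, ex, h1, by simp, h2, by rwa [natDegree_X_sub_C], by omega,
      Or.inr ⟨s, rfl, fun h0 => (hzero s).1 h0 rfl⟩⟩

lemma excess_relation_D [DecidableEq F] (h : TwoSecantConfig a D B T n₁ n₂ m) {R : F × F}
    (hR : R ∈ T) {M ex : F[X]}
    (hex : pencil T R * nodal D id * slopesToB B R * M = (X ^ Fintype.card F - X) * ex)
    {d : F} (hd : d ∈ D) :
    (derivative (nodal D id)).eval d * M.eval d =
      (-R.1) ^ a * ex.eval d * (R.2 - d * R.1 - (n₂ - d * n₁)) := by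
  have hx := h.fst_ne R hR
  have e1 := h.mem_T_prod_eq hd hR
  have e2 : ∏ b ∈ B, (R.2 - d * R.1 - b) = (-R.1) ^ a * (slopesToB B R).eval d := by
    rw [slopesToB, eval_nodal, ← h.cardB, ← Finset.prod_const, ← Finset.prod_mul_distrib]
    refine Finset.prod_congr rfl fun b _ => ?_
    field_simp
    ring
  have e3 : ∏ u ∈ T.erase R, (R.2 - d * R.1 - (u.2 - d * u.1)) = (pencil T R).eval d := by
    rw [eval_pencil]
    exact Finset.prod_congr rfl fun u _ => by ring
  rw [e2, e3] at e1
  have e4 := derivative_eval_mul_eval_eq_neg (E := nodal D id)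
    (G := pencil T R * slopesToB B R * M) (ex := ex) (by rw [← hex]; ring) (d := d)
    (eval_nodal_at_node (v := (id : F → F)) hd)
  simp only [eval_mul] at e4
  linear_combination (eval d (derivative (nodal D id)) * eval d M) * e1 -
    ((-R.1) ^ a * (R.2 - d * R.1 - (n₂ - d * n₁))) * e4

lemma excess_relation_B [DecidableEq F] (h : TwoSecantConfig a D B T n₁ n₂ m) {R : F × F}
    (hR : R ∈ T) {M ex : F[X]}
    (hex : pencil T R * nodal D id * slopesToB B R * M = (X ^ Fintype.card F - X) * ex)
    {b : F} (hb : b ∈ B) :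
    (derivative (slopesToB B R)).eval ((R.2 - b) / R.1) * (∏ u ∈ T.erase R, u.1) *
      M.eval ((R.2 - b) / R.1) = ex.eval ((R.2 - b) / R.1) * ((R.2 - b) / R.1 - m b) := by
  have hx := h.fst_ne R hR
  have e1 := h.mem_T_prod_eq' hb hR
  have e3 : (pencil T R).eval ((R.2 - b) / R.1) = (∏ u ∈ T.erase R, u.1) *
      ∏ u ∈ T.erase R, ((R.2 - b) / R.1 - (u.2 - b) / u.1) := by
    rw [eval_pencil, ← Finset.prod_mul_distrib]
    refine Finset.prod_congr rfl fun u hu => ?_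
    have := h.fst_ne u (Finset.mem_of_mem_erase hu)
    field_simp
    ring
  have e4 := derivative_eval_mul_eval_eq_neg (E := slopesToB B R)
    (G := pencil T R * nodal D id * M) (ex := ex) (by rw [← hex]; ring) (d := (R.2 - b) / R.1)
    (eval_nodal_at_node (v := fun b => (R.2 - b) / R.1) hb)
  simp only [eval_mul, e3, eval_nodal (s := D), id] at e4
  set s := (R.2 - b) / R.1
  linear_combination (eval s (derivative (slopesToB B R)) * (∏ u ∈ T.erase R, u.1) *
    eval s M) * e1 - (s - m b) * e4

end TwoSecantConfig

end Configuration

section Consequences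

variable {F : Type*} [Field F] [Fintype F]

namespace TwoSecantConfig

variable {a : ℕ} {D B : Finset F} {T : Finset (F × F)} {n₁ n₂ : F} {m : F → F}

/-- When the tangents at `D` pass through the origin and those at `B` are horizontal, all further
points lie on the line joining the two nuclei. -/
lemma snd_eq_zero (h : TwoSecantConfig a D B T 0 0 m) (hm : ∀ b ∈ B, m b = 0) {R : F × F}
    (hR : R ∈ T) : R.2 = 0 := by
  classical
  have ha := h.two_lt
  have hx := h.fst_ne R hR
  set K := ∏ u ∈ T, u.1 with hK
  have hK0 : K ≠ 0 := Finset.prod_ne_zero_iff.2 h.fst_ne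
  set E := nodal D (id : F → F) with hE
  set G := nodal B (id : F → F) with hG
  have hrel : ∀ d ∈ D, ∀ b ∈ B, d * (derivative E).eval d = (b * (derivative G).eval b) * K := by
    intro d hd b hb
    have := h.derivative_relation hd hb
    rw [hm b hb] at this
    linear_combination this
  obtain ⟨d₀, hd₀⟩ : D.Nonempty := Finset.card_pos.1 (by rw [h.cardD]; omega)
  obtain ⟨b₀, hb₀⟩ : B.Nonempty := Finset.card_pos.1 (by rw [h.cardB]; omega)
  have hd₀0 : d₀ ≠ 0 := fun h0 => h.slope_notMem hb₀ (by rw [hm b₀ hb₀, ← h0]; exact hd₀)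
  set c := d₀ * (derivative E).eval d₀ with hc
  have hc0 : c ≠ 0 :=
    mul_ne_zero hd₀0 (nodal_derivative_ne_zero (v := (id : F → F)) Function.injective_id.injOn hd₀)
  have hcD : ∀ d ∈ D, d * (derivative E).eval d = c := fun d hd =>
    (hrel d hd b₀ hb₀).trans (hrel d₀ hd₀ b₀ hb₀).symm
  have hcB : ∀ b ∈ B, b * (derivative G).eval b = c / K := fun b hb => by
    rw [eq_div_iff hK0, ← hrel d₀ hd₀ b hb]
  obtain ⟨haF, hsumD⟩ := sum_eq_zero_of_mul_derivative_const (by rw [h.cardD]; omega) hc0 hcD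
  obtain ⟨-, hsumB⟩ := sum_eq_zero_of_mul_derivative_const (by rw [h.cardB]; omega)
    (div_ne_zero hc0 hK0) hcB
  rw [h.cardD] at haF
  obtain ⟨M, ex, hex, hM, hex0, -, hexdeg, -⟩ := h.exists_excess hR
  set P : F[X] := X * (C R.2 - C R.1 * X) * ex with hP
  have hlin : (C R.2 - C R.1 * X : F[X]).natDegree = 1 := by
    have := (natDegree_linear_form R.1 R.2 (Or.inl hx)).2
    rw [← neg_sub, natDegree_neg, this, if_neg hx]
  have hlin0 : (C R.2 - C R.1 * X : F[X]) ≠ 0 := by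
    intro h0; rw [h0] at hlin; simp at hlin
  have hPdeg : P.natDegree = ex.natDegree + 2 := by
    rw [hP, natDegree_mul (mul_ne_zero X_ne_zero hlin0) hex0, natDegree_mul X_ne_zero hlin0, hlin,
      natDegree_X]
    ring
  have hMa : M.coeff (a - 1) = 0 := coeff_eq_zero_of_natDegree_lt (by omega)
  have hPcoeff : P.coeff (a - 1) = 0 := by
    have key := eq_C_mul_nodal (s := D) (v := id) Function.injective_id.injOn
      (Q := C ((-R.1) ^ a) * P - C c * M)
      (by
        rw [h.cardD]
        refine (natDegree_sub_le _ _).trans (max_le ?_ ?_)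
        · exact (natDegree_C_mul_le _ _).trans (by omega)
        · exact (natDegree_C_mul_le _ _).trans (by omega))
      (by
        intro d hd
        have e1 := h.excess_relation_D hR hex hd
        have e2 := hcD d hd
        simp only [hP, id, eval_sub, eval_mul, eval_C, eval_X]
        linear_combination (-d) * e1 + eval d M * e2)
    have := congrArg (fun Q => coeff Q (D.card - 1)) key
    simp only [coeff_C_mul] at this
    rw [coeff_card_sub_one_nodal _ (by rw [h.cardD]; omega)] at this
    simp only [id, hsumD, h.cardD, coeff_sub, coeff_C_mul, hMa] at this
    simpa [hx] using this
  have hinj : Set.InjOn (fun b => (R.2 - b) / R.1) (B : Set F) := by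
    intro b _ b' _ hbb
    simpa [div_left_inj' hx] using hbb
  have hder : ∀ b ∈ B, (derivative (slopesToB B R)).eval ((R.2 - b) / R.1) =
      (-R.1⁻¹) ^ (a - 1) * (derivative G).eval b := by
    intro b hb
    have e1 := eval_nodal_derivative_eval_node_eq (v := fun b => (R.2 - b) / R.1) hb
    have e2 := eval_nodal_derivative_eval_node_eq (v := (id : F → F)) hb
    simp only [id, eval_nodal] at e1 e2
    rw [slopesToB, e1, hG, e2, ← h.cardB, ← Finset.card_erase_of_mem hb, ← Finset.prod_const,
      ← Finset.prod_mul_distrib]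
    exact Finset.prod_congr rfl fun b' _ => by field_simp; ring
  set c' := (-R.1⁻¹) ^ (a - 1) * (c / K) * (∏ u ∈ T.erase R, u.1) with hc'
  have key := eq_C_mul_nodal (s := B) (v := fun b => (R.2 - b) / R.1) hinj
    (Q := P - C c' * M)
    (by
      rw [h.cardB]
      exact (natDegree_sub_le _ _).trans (max_le (by omega)
        ((natDegree_C_mul_le _ _).trans (by omega))))
    (by
      intro b hb
      have e1 := h.excess_relation_B hR hex hb
      have e2 := hcB b hb
      have e3 : R.2 - R.1 * ((R.2 - b) / R.1) = b := by field_simp; ring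
      rw [hder b hb, hm b hb, sub_zero] at e1
      simp only [hP, eval_sub, eval_mul, eval_C, eval_X, e3, hc', ← e2]
      linear_combination (-b) * e1)
  set κ := (P - C c' * M).coeff B.card with hκ
  have hκ0 : κ ≠ 0 := by
    intro h0
    rw [h0, C_0, zero_mul, sub_eq_zero] at key
    have := congrArg natDegree key
    have h2 := natDegree_C_mul_le c' M
    omega
  have := congrArg (fun Q => coeff Q (B.card - 1)) key
  simp only [coeff_C_mul] at this
  rw [coeff_card_sub_one_nodal _ (by rw [h.cardB]; omega), h.cardB, coeff_sub, coeff_C_mul, hMa,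
    hPcoeff, mul_zero, sub_zero, zero_eq_mul, or_iff_right hκ0, neg_eq_zero, ← Finset.sum_div,
    div_eq_zero_iff, or_iff_left hx, Finset.sum_sub_distrib, hsumB, sub_zero, Finset.sum_const,
    h.cardB, nsmul_eq_mul] at this
  exact (mul_eq_zero.1 this).resolve_left haF

lemma quadratic_eq_zero {F : Type*} [Field F] {D : Finset F} (hD : 2 < D.card) {α β γ : F}
    (h : ∀ d ∈ D, α * d ^ 2 + β * d + γ = 0) : α = 0 ∧ β = 0 ∧ γ = 0 := by
  have key : C α * X ^ 2 + C β * X + C γ = 0 := by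
    refine eq_zero_of_natDegree_lt_card_of_eval_eq_zero' _ D (fun d hd => by simpa using h d hd) ?_
    exact natDegree_quadratic_le.trans_lt hD
  refine ⟨?_, ?_, ?_⟩
  · simpa [coeff_X, coeff_C] using congrArg (fun Q => coeff Q 2) key
  · simpa [coeff_X, coeff_C] using congrArg (fun Q => coeff Q 1) key
  · simpa [coeff_X, coeff_C] using congrArg (fun Q => coeff Q 0) key

/-- The common nucleus of both lines cannot lie off the lines. -/
lemma derivative_not_const (h : TwoSecantConfig a D B T n₁ n₂ m) {c : F}
    (hc : ∀ d ∈ D, (derivative (nodal D id)).eval d = c) : False := by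
  classical
  have ha := h.two_lt
  have haF : (a : F) = 0 := by
    rw [← h.cardD]
    exact card_eq_zero_of_derivative_const (by rw [h.cardD]; omega) hc
  obtain ⟨d₀, hd₀⟩ : D.Nonempty := Finset.card_pos.1 (by rw [h.cardD]; omega)
  have hc0 : c ≠ 0 := by
    rw [← hc d₀ hd₀]
    exact nodal_derivative_ne_zero (v := (id : F → F)) Function.injective_id.injOn hd₀
  have hfib : ∀ R ∈ T, (T.filter fun u => u.1 = R.1).card = a := by
    intro R hR
    have hx := h.fst_ne R hR
    obtain ⟨M, ex, hex, hM, hex0, hdeg, hexdeg, hcase⟩ := h.exists_excess hR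
    have hM0 : M ≠ 0 := by
      rcases hcase with ⟨rfl, -⟩ | ⟨s, rfl, -⟩
      · exact one_ne_zero
      · exact X_sub_C_ne_zero s
    set L : F[X] := C (n₁ - R.1) * X - C (n₂ - R.2) with hL
    have hLdeg : L.natDegree ≤ 1 := by rw [hL]; compute_degree
    have key : C c * M = C ((-R.1) ^ a) * (ex * L) := by
      refine eq_of_degree_sub_lt_of_eval_index_eq D (v := id) Function.injective_id.injOn ?_ ?_
      · rw [h.cardD]
        refine (degree_le_natDegree).trans_lt ?_
        rw [Nat.cast_lt]
        have h1 := natDegree_C_mul_le c M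
        have h2 := natDegree_C_mul_le ((-R.1) ^ a) (ex * L)
        have h3 := natDegree_mul_le (p := ex) (q := L)
        refine (natDegree_sub_le _ _).trans_lt (max_lt ?_ ?_) <;> omega
      · intro d hd
        have e1 := h.excess_relation_D hR hex hd
        rw [hc d hd] at e1
        simp only [hL, id, eval_sub, eval_mul, eval_C, eval_X]
        linear_combination e1
    have hL0 : L ≠ 0 := by
      intro h0
      rw [h0, mul_zero, mul_zero] at key
      exact mul_ne_zero (C_ne_zero.2 hc0) hM0 key
    have hkdeg : M.natDegree = ex.natDegree + L.natDegree := by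
      have := congrArg natDegree key
      rwa [natDegree_C_mul hc0, natDegree_C_mul (pow_ne_zero _ (neg_ne_zero.2 hx)),
        natDegree_mul hex0 hL0] at this
    have hcount : (T.filter fun u => u.1 = R.1).card =
        ((T.erase R).filter fun u => u.1 = R.1).card + 1 := by
      rw [Finset.filter_erase, Finset.card_erase_add_one]
      simp [hR]
    rcases hcase with ⟨rfl, hf0⟩ | ⟨s, rfl, hs⟩
    · rw [natDegree_one] at hkdeg hdeg
      omega
    · rw [natDegree_X_sub_C] at hkdeg hdeg
      have hexs : ex.natDegree = 0 := by
        by_contra hne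
        have hLc : L.natDegree = 0 := by omega
        have e1 := congrArg (eval s) key
        rw [eq_C_of_natDegree_eq_zero hLc] at e1 hL0
        simp only [eval_mul, eval_C, eval_sub, eval_X, sub_self, mul_zero] at e1
        have hexs0 : ex.eval s = 0 := by
          have h1 := (mul_eq_zero.1 e1.symm).resolve_left (pow_ne_zero _ (neg_ne_zero.2 hx))
          exact (mul_eq_zero.1 h1).resolve_right (C_ne_zero.1 hL0)
        have e2 := derivative_eval_mul_eval_eq_neg (E := X - C s)
          (G := pencil T R * nodal D id * slopesToB B R) (ex := ex) (by rw [← hex]; ring)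
          (d := s) (by simp)
        rw [hexs0] at e2
        simp only [derivative_sub, derivative_X, derivative_C, sub_zero, eval_one, one_mul,
          neg_zero] at e2
        exact hs e2
      omega
  have hT : T.card = (T.image Prod.fst).card * a := by
    rw [Finset.card_eq_sum_card_fiberwise (f := Prod.fst) (t := T.image Prod.fst)
      (fun u hu => Finset.mem_coe.2 (Finset.mem_image_of_mem _ hu)), ← smul_eq_mul,
      ← Finset.sum_const]
    refine Finset.sum_congr rfl fun x hx => ?_
    obtain ⟨R, hR, rfl⟩ := Finset.mem_image.1 hx
    exact hfib R hR
  have h1 := congrArg (Nat.cast (R := F)) h.cardT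
  rw [hT, FiniteField.cast_card_eq_zero] at h1
  push_cast at h1
  rw [haF] at h1
  simp at h1

/-- The nucleus of each of the two lines lies on the other line. -/
theorem nuclei (h : TwoSecantConfig a D B T n₁ n₂ m) :
    n₁ = 0 ∧ ∀ b ∈ B, ∀ b' ∈ B, m b = m b' := by
  classical
  have ha := h.two_lt
  have hD2 : 2 < D.card := by rw [h.cardD]; exact ha
  set K := ∏ u ∈ T, u.1 with hK
  have hK0 : K ≠ 0 := Finset.prod_ne_zero_iff.2 h.fst_ne
  set β : F → F := fun b => (derivative (nodal B id)).eval b * K with hβ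
  have hβ0 : ∀ b ∈ B, β b ≠ 0 := fun b hb => mul_ne_zero
    (nodal_derivative_ne_zero (v := (id : F → F)) Function.injective_id.injOn hb) hK0
  have hrel : ∀ d ∈ D, ∀ b ∈ B,
      (derivative (nodal D id)).eval d * (d - m b) = β b * (d * n₁ + b - n₂) :=
    fun d hd b hb => h.derivative_relation hd hb
  have hδ0 : ∀ d ∈ D, (derivative (nodal D id)).eval d ≠ 0 := fun d hd =>
    nodal_derivative_ne_zero (v := (id : F → F)) Function.injective_id.injOn hd
  have hquad : ∀ b ∈ B, ∀ b' ∈ B, n₁ * (β b' - β b) = 0 ∧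
      β b' * (b' - n₂) - β b' * n₁ * m b - (β b * (b - n₂) - β b * n₁ * m b') = 0 ∧
      -(m b * β b' * (b' - n₂)) + m b' * β b * (b - n₂) = 0 := by
    intro b hb b' hb'
    refine quadratic_eq_zero hD2 fun d hd => ?_
    apply mul_left_cancel₀ (hδ0 d hd)
    linear_combination (β b' * (d * n₁ + b' - n₂)) * hrel d hd b hb -
      (β b * (d * n₁ + b - n₂)) * hrel d hd b' hb'
  by_cases hn : n₁ = 0
  · refine ⟨hn, fun b hb b' hb' => ?_⟩
    obtain ⟨-, h1, h2⟩ := hquad b hb b' hb'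
    have hb0 : b - n₂ ≠ 0 := by
      intro h0
      obtain ⟨d₀, hd₀⟩ : D.Nonempty := Finset.card_pos.1 (by omega)
      have := hrel d₀ hd₀ b hb
      rw [hn, mul_zero, zero_add, h0, mul_zero, mul_eq_zero, or_iff_right (hδ0 d₀ hd₀),
        sub_eq_zero] at this
      exact h.slope_notMem hb (this ▸ hd₀)
    rw [hn] at h1
    apply mul_left_cancel₀ (mul_ne_zero (hβ0 b hb) hb0)
    linear_combination (-h2) - m b * h1
  · exfalso
    have hβc : ∀ b ∈ B, ∀ b' ∈ B, β b' = β b := fun b hb b' hb' =>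
      sub_eq_zero.1 ((mul_eq_zero.1 (hquad b hb b' hb').1).resolve_left hn)
    have hw : ∀ b ∈ B, b - n₂ = -(m b * n₁) := by
      intro b hb
      obtain ⟨b', hb', hbb⟩ := Finset.exists_mem_ne (s := B) (by rw [h.cardB]; omega) b
      obtain ⟨-, h1, h2⟩ := hquad b hb b' hb'
      rw [hβc b hb b' hb'] at h1 h2
      have h1' : b' - n₂ - n₁ * m b - (b - n₂ - n₁ * m b') = 0 := by
        apply mul_left_cancel₀ (hβ0 b hb); linear_combination h1
      have h2' : -(m b * (b' - n₂)) + m b' * (b - n₂) = 0 := by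
        apply mul_left_cancel₀ (hβ0 b hb); linear_combination h2
      apply mul_left_cancel₀ (sub_ne_zero.2 hbb)
      linear_combination (b - n₂) * h1' - n₁ * h2'
    obtain ⟨b₀, hb₀⟩ : B.Nonempty := Finset.card_pos.1 (by rw [h.cardB]; omega)
    refine h.derivative_not_const (c := β b₀ * n₁) fun d hd => ?_
    have hdm : d - m b₀ ≠ 0 := fun h0 => h.slope_notMem hb₀ (sub_eq_zero.1 h0 ▸ hd)
    apply mul_right_cancel₀ hdm
    rw [hrel d hd b₀ hb₀]
    linear_combination β b₀ * hw b₀ hb₀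

end TwoSecantConfig

end Consequences

section Classification

variable {F : Type*} [Field F] [Fintype F]

lemma not_isSquare_iff_pow_eq_neg_one {a : ℕ} (ha : 0 < a) (hq : Fintype.card F = 2 * a + 1)
    (z : F) : ¬ IsSquare z ↔ z ^ a = -1 := by
  have hchar : ringChar F ≠ 2 := fun h2 => by
    have := FiniteField.even_card_of_char_two h2
    omega
  have hneg : (-1 : F) ≠ 1 := Ring.neg_one_ne_one_of_char_ne_two hchar
  have hdiv : Fintype.card F / 2 = a := by omega
  by_cases hz : z = 0
  · simp [hz, ha.ne']
  · have h1 := FiniteField.isSquare_iff hchar hz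
    have h2 := FiniteField.pow_dichotomy hchar hz
    rw [hdiv] at h1 h2
    rw [h1]
    constructor
    · exact fun h => h2.resolve_left h
    · intro h h'
      exact hneg (h.symm.trans h')

lemma exists_pow_eq_of_sq_eq_one {a : ℕ} (ha : 0 < a) (hq : Fintype.card F = 2 * a + 1) {η : F}
    (hη : η ^ 2 = 1) : ∃ z : F, z ≠ 0 ∧ z ^ a = η := by
  have hchar : ringChar F ≠ 2 := fun h2 => by
    have := FiniteField.even_card_of_char_two h2
    omega
  rcases sq_eq_one_iff.1 hη with rfl | rfl
  · exact ⟨1, one_ne_zero, one_pow a⟩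
  · obtain ⟨z, hz⟩ := FiniteField.exists_nonsquare hchar
    exact ⟨z, fun h0 => hz (h0 ▸ IsSquare.zero), (not_isSquare_iff_pow_eq_neg_one ha hq z).1 hz⟩

/-- A set of `a` elements with the same `a`-th power contains all elements with that power. -/
lemma mem_iff_pow_eq {F : Type*} [Field F] {a : ℕ} (ha : 0 < a) {E : Finset F} (hE : E.card = a)
    {η : F} (h : ∀ x ∈ E, x ^ a = η) (x : F) : x ∈ E ↔ x ^ a = η := by
  classical
  refine ⟨h x, fun hx => ?_⟩
  have hsub : E ⊆ (nthRoots a η).toFinset := fun y hy => by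
    rw [Multiset.mem_toFinset, mem_nthRoots ha]
    exact h y hy
  have hle : (nthRoots a η).toFinset.card ≤ E.card := by
    rw [hE]
    exact (Multiset.toFinset_card_le _).trans (card_nthRoots a η)
  rw [Finset.eq_of_subset_of_card_le hsub hle, Multiset.mem_toFinset, mem_nthRoots ha]
  exact hx

namespace TwoSecantConfig

variable {a : ℕ} {D B : Finset F} {T : Finset (F × F)} {m : F → F}

/-- In coordinates adapted to the two nuclei, the configuration is either the union of the two
lines without three points, or consists of cosets of the nonzero squares. -/
theorem classification (h : TwoSecantConfig a D B T 0 0 m) (hm : ∀ b ∈ B, m b = 0) :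
    (T = ∅ ∧ (∀ s, s ∈ D ↔ s ≠ 0) ∧ ∀ s, s ∈ B ↔ s ≠ 0) ∨
    ∃ α β : F, α ≠ 0 ∧ β ≠ 0 ∧ (∀ s, s ∈ D ↔ ¬ IsSquare (-(s * α / β))) ∧
      (∀ s, s ∈ B ↔ ¬ IsSquare (-(β / s))) ∧
      ∀ u : F × F, u ∈ T ↔ u.2 = 0 ∧ ¬ IsSquare (-(u.1 / α)) := by
  classical
  have ha := h.two_lt
  have ha0 : 0 < a := by omega
  obtain ⟨d₀, hd₀⟩ : D.Nonempty := Finset.card_pos.1 (by rw [h.cardD]; omega)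
  obtain ⟨b₀, hb₀⟩ : B.Nonempty := Finset.card_pos.1 (by rw [h.cardB]; omega)
  have hD0 : (0 : F) ∉ D := by
    have := h.slope_notMem hb₀
    rwa [hm b₀ hb₀] at this
  have hB0 : (0 : F) ∉ B := fun h0 => by
    have := (h.tanD d₀ hd₀ 0).2 (Or.inl h0)
    simp at this
  have hsnd : ∀ R ∈ T, R.2 = 0 := fun R hR => h.snd_eq_zero hm hR
  have hcardT := h.cardT
  rcases T.eq_empty_or_nonempty with rfl | ⟨R₀, hR₀⟩
  · have key : ∀ E : Finset F, E.card = a → (0 : F) ∉ E → ∀ s, s ∈ E ↔ s ≠ 0 := by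
      intro E hE h0 s
      have : E = Finset.univ.erase 0 := by
        refine Finset.eq_of_subset_of_card_le (fun x hx => ?_) ?_
        · simpa using fun hx0 : x = 0 => h0 (hx0 ▸ hx)
        · rw [Finset.card_erase_of_mem (Finset.mem_univ _), Finset.card_univ, hE]
          simp at hcardT
          omega
      simp [this]
    exact Or.inl ⟨rfl, key D h.cardD hD0, key B h.cardB hB0⟩
  right
  have hDB : ∀ R ∈ T, ∀ s, s ≠ 0 → (s ∈ D ↔ -(s * R.1) ∉ B) := by
    intro R hR s hs
    have hR2 := hsnd R hR
    constructor
    · intro hsD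
      have := h.intercept_notMem_B hsD hR
      rwa [hR2, zero_sub] at this
    · intro hsB
      obtain ⟨o, ho, hos⟩ := h.tanT R hR
      have hnone : o = none := by
        by_contra hne
        obtain ⟨u, hu, huR, hux⟩ := ho.1 hne
        exact huR (Prod.ext hux ((hsnd u hu).trans hR2.symm))
      rcases (hos s).1 (by simp [hnone]) with hsD | hsB' | ⟨u, hu, huR, hus⟩
      · exact hsD
      · rw [hR2, zero_sub] at hsB'
        exact absurd hsB' hsB
      · rw [hR2, hsnd u hu, zero_sub, zero_sub, neg_inj] at hus
        exact absurd (Prod.ext (mul_left_cancel₀ hs hus) ((hsnd u hu).trans hR2.symm)) huR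
  set x₀ := R₀.1 with hx₀
  have hx₀0 : x₀ ≠ 0 := h.fst_ne R₀ hR₀
  have hd₀0 : d₀ ≠ 0 := fun h0 => hD0 (h0 ▸ hd₀)
  have hB : ∀ b, b ∈ B ↔ b ≠ 0 ∧ -(b / x₀) ∉ D := by
    intro b
    by_cases hb : b = 0
    · simp [hb, hB0]
    · have := hDB R₀ hR₀ (-(b / x₀)) (neg_ne_zero.2 (div_ne_zero hb hx₀0))
      rw [← hx₀, neg_mul, neg_neg, div_mul_cancel₀ _ hx₀0] at this
      rw [this]
      simp [hb]
  have hq : Fintype.card F = 2 * a + 1 := by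
    have himg : B = ((Finset.univ.erase 0) \ D).image fun s => -(s * x₀) := by
      ext b
      rw [hB]
      simp only [Finset.mem_image, Finset.mem_sdiff, Finset.mem_erase, Finset.mem_univ, and_true]
      constructor
      · rintro ⟨hb, hbD⟩
        exact ⟨-(b / x₀), ⟨neg_ne_zero.2 (div_ne_zero hb hx₀0), hbD⟩, by field_simp⟩
      · rintro ⟨s, ⟨hs, hsD⟩, rfl⟩
        refine ⟨neg_ne_zero.2 (mul_ne_zero hs hx₀0), ?_⟩
        rwa [neg_div, neg_neg, mul_div_cancel_right₀ _ hx₀0]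
    have hcard := congrArg Finset.card himg
    rw [h.cardB, Finset.card_image_of_injective _ (fun s t hst => by simpa [hx₀0] using hst),
      Finset.card_sdiff_of_subset (fun d hd => by simpa using fun h0 : d = 0 => hD0 (h0 ▸ hd)), h.cardD,
      Finset.card_erase_of_mem (Finset.mem_univ _), Finset.card_univ] at hcard
    omega
  set Xs := T.image Prod.fst with hXs
  have hXscard : Xs.card = a := by
    rw [hXs, Finset.card_image_of_injOn]
    · omega
    · intro u hu v hv huv
      exact Prod.ext huv ((hsnd u hu).trans (hsnd v hv).symm)
  have hmul : ∀ x ∈ Xs, ∀ d ∈ D, d * (x / x₀) ∈ D := by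
    intro x hx d hd
    obtain ⟨R, hR, rfl⟩ := Finset.mem_image.1 hx
    have hd0 : d ≠ 0 := fun h0 => hD0 (h0 ▸ hd)
    have hR0 := h.fst_ne R hR
    rw [hDB R₀ hR₀ _ (mul_ne_zero hd0 (div_ne_zero hR0 hx₀0)), ← hx₀, mul_assoc,
      div_mul_cancel₀ _ hx₀0]
    exact (hDB R hR d hd0).1 hd
  have hXs0 : ∀ x ∈ Xs, x ≠ 0 := by
    intro x hx
    obtain ⟨R, hR, rfl⟩ := Finset.mem_image.1 hx
    exact h.fst_ne R hR
  have hXspow : ∀ x ∈ Xs, x ^ a = x₀ ^ a := by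
    intro x hx
    have hinj : Function.Injective fun d : F => d * (x / x₀) :=
      mul_left_injective₀ (div_ne_zero (hXs0 x hx) hx₀0)
    have himg : D.image (fun d => d * (x / x₀)) = D := by
      refine Finset.eq_of_subset_of_card_le (Finset.image_subset_iff.2 fun d hd => hmul x hx d hd) ?_
      rw [Finset.card_image_of_injective _ hinj]
    have hprod : ∏ d ∈ D, d = (∏ d ∈ D, d) * (x / x₀) ^ a := by
      conv_lhs => rw [← himg]
      rw [Finset.prod_image (fun d _ d' _ hdd => hinj hdd), Finset.prod_mul_distrib,
        Finset.prod_const, h.cardD]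
    have hne : ∏ d ∈ D, d ≠ 0 := Finset.prod_ne_zero_iff.2 fun d hd h0 => hD0 (h0 ▸ hd)
    have hone : (x / x₀) ^ a = 1 := by
      apply mul_left_cancel₀ hne
      rw [← hprod, mul_one]
    rw [div_pow, div_eq_one_iff_eq (pow_ne_zero _ hx₀0)] at hone
    exact hone
  have hXsiff := mem_iff_pow_eq ha0 hXscard hXspow
  have hDpow : ∀ d ∈ D, d ^ a = d₀ ^ a := by
    have himg : Xs.image (fun x => d₀ * (x / x₀)) = D := by
      refine Finset.eq_of_subset_of_card_le
        (Finset.image_subset_iff.2 fun x hx => hmul x hx d₀ hd₀) ?_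
      rw [Finset.card_image_of_injective _ (fun x y hxy => by simpa [hd₀0, hx₀0] using hxy),
        hXscard, h.cardD]
    intro d hd
    rw [← himg] at hd
    obtain ⟨x, hx, rfl⟩ := Finset.mem_image.1 hd
    rw [mul_pow, div_pow, hXspow x hx, div_self (pow_ne_zero _ hx₀0), mul_one]
  have hDiff := mem_iff_pow_eq ha0 h.cardD hDpow
  have hsq : ∀ z : F, z ≠ 0 → (z ^ a) ^ 2 = 1 := by
    intro z hz
    rw [← pow_mul, mul_comm a 2, ← FiniteField.pow_card_sub_one_eq_one z hz, hq,
      Nat.add_sub_cancel]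
  have hnsq := not_isSquare_iff_pow_eq_neg_one ha0 hq
  have hone2 : ((-1 : F) ^ a) ^ 2 = 1 := hsq (-1) (by simp)
  set ξ := x₀ ^ a with hξ
  set δ := d₀ ^ a with hδ
  have hξ2 : ξ ^ 2 = 1 := hsq x₀ hx₀0
  have hδ2 : δ ^ 2 = 1 := hsq d₀ hd₀0
  obtain ⟨α, hα0, hα⟩ := exists_pow_eq_of_sq_eq_one ha0 hq (η := -((-1) ^ a * ξ))
    (by linear_combination ((-1) ^ a) ^ 2 * hξ2 + hone2)
  obtain ⟨β, hβ0, hβ⟩ := exists_pow_eq_of_sq_eq_one ha0 hq (η := δ * ξ)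
    (by linear_combination δ ^ 2 * hξ2 + hδ2)
  have hneg : ∀ z : F, (-z) ^ a = (-1) ^ a * z ^ a := fun z => neg_pow z a
  have hξ0 : ξ ≠ 0 := pow_ne_zero _ hx₀0
  refine ⟨α, β, hα0, hβ0, fun s => ?_, fun s => ?_, fun u => ?_⟩
  · rw [hnsq, hDiff, hneg, div_pow, mul_pow, mul_div_assoc', div_eq_iff (pow_ne_zero _ hβ0), hα, hβ]
    constructor
    · intro hs
      rw [hs]
      linear_combination (-(δ * ξ)) * hone2
    · intro hs
      apply mul_right_cancel₀ hξ0
      linear_combination (-hs) - (s ^ a * ξ) * hone2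
  · rw [hnsq, hB, hDiff, hneg, div_pow]
    by_cases hs : s = 0
    · simp [hs, ha0.ne']
    · have hs2 := hsq s hs
      have hsa := pow_ne_zero a hs
      rw [hneg (β / s), div_pow, mul_div_assoc', div_eq_iff hξ0, mul_div_assoc', div_eq_iff hsa, hβ]
      have hdi : (-1) ^ a * s ^ a = δ * ξ ∨ (-1) ^ a * s ^ a = -(δ * ξ) := by
        rw [← sq_eq_sq_iff_eq_or_eq_neg]
        linear_combination ((-1) ^ a) ^ 2 * hs2 + hone2 - δ ^ 2 * hξ2 - hδ2
      have hpm : δ * ξ ≠ -(δ * ξ) := by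
        intro h0
        have hchar : ringChar F ≠ 2 := fun h2 => by
          have := FiniteField.even_card_of_char_two h2
          omega
        refine Ring.neg_one_ne_one_of_char_ne_two hchar ?_
        apply mul_left_cancel₀ (mul_ne_zero (pow_ne_zero a hd₀0) hξ0)
        linear_combination -h0
      constructor
      · rintro ⟨-, hne⟩
        have := hdi.resolve_left hne
        linear_combination (-1 : F) ^ a * this - s ^ a * hone2
      · intro heq
        refine ⟨hs, fun h0 => hpm ?_⟩
        linear_combination (-1 : F) ^ a * heq - δ * ξ * hone2 - h0
  · rw [hnsq]
    have hiff : (-(u.1 / α)) ^ a = -1 ↔ u.1 ^ a = ξ := by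
      rw [hneg, div_pow, mul_div_assoc', div_eq_iff (pow_ne_zero _ hα0), hα]
      constructor
      · intro hu
        linear_combination (-1 : F) ^ a * hu + (ξ - u.1 ^ a) * hone2
      · intro hu
        rw [hu]
        ring
    rw [hiff, ← hXsiff, hXs, Finset.mem_image]
    constructor
    · exact fun hu => ⟨hsnd u hu, u, hu, rfl⟩
    · rintro ⟨hu2, v, hv, hvu⟩
      rwa [show u = v from Prod.ext hvu.symm (hu2.trans (hsnd v hv).symm)]

end TwoSecantConfig

end Classification

end

section Coordinates

variable {F : Type*} [Field F]

/-- The point with coordinate vector `v` in the frame `g`. -/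
def framePt (g : (Fin 3 → F) ≃ₗ[F] (Fin 3 → F)) (v : Fin 3 → F) (hv : v ≠ 0) : PGPoint F :=
  Projectivization.mk F (g v) (by simpa using hv)

/-- The linear form with coefficient vector `c`. -/
def coordForm (c : Fin 3 → F) : (Fin 3 → F) →ₗ[F] F := ∑ i, c i • LinearMap.proj i

lemma coordForm_apply (c v : Fin 3 → F) :
    coordForm c v = c 0 * v 0 + c 1 * v 1 + c 2 * v 2 := by
  simp [coordForm, Fin.sum_univ_three]

lemma coordForm_ne_zero {c : Fin 3 → F} (hc : c ≠ 0) : coordForm c ≠ 0 := by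
  intro h0
  apply hc
  funext i
  have := LinearMap.congr_fun h0 (Pi.single i 1)
  simpa [coordForm, Pi.single_apply] using this

/-- The line with dual coordinate vector `c` in the frame `g`. -/
def frameLine (g : (Fin 3 → F) ≃ₗ[F] (Fin 3 → F)) (c : Fin 3 → F) (hc : c ≠ 0) : PGLine F :=
  ⟨LinearMap.ker (coordForm c ∘ₗ g.symm.toLinearMap), by
    have hne : coordForm c ∘ₗ g.symm.toLinearMap ≠ 0 := by
      intro h0
      refine coordForm_ne_zero hc (LinearMap.ext fun v => ?_)
      simpa using LinearMap.congr_fun h0 (g v)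
    have := Module.Dual.finrank_ker_add_one_of_ne_zero hne
    rw [Module.finrank_fin_fun] at this
    omega⟩

variable (g : (Fin 3 → F) ≃ₗ[F] (Fin 3 → F))

lemma pgMem_framePt {v : Fin 3 → F} (hv : v ≠ 0) (L : PGLine F) :
    pgMem (framePt g v hv) L ↔ g v ∈ L.val := by
  rw [pgMem, framePt, Projectivization.submodule_mk, Submodule.span_singleton_le_iff_mem]

lemma pgMem_framePt_frameLine {v c : Fin 3 → F} (hv : v ≠ 0) (hc : c ≠ 0) :
    pgMem (framePt g v hv) (frameLine g c hc) ↔ c 0 * v 0 + c 1 * v 1 + c 2 * v 2 = 0 := by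
  rw [pgMem_framePt, ← coordForm_apply]
  simp [frameLine]

lemma framePt_eq_iff {v w : Fin 3 → F} (hv : v ≠ 0) (hw : w ≠ 0) :
    framePt g v hv = framePt g w hw ↔ ∃ k : F, k • w = v := by
  rw [framePt, framePt, Projectivization.mk_eq_mk_iff']
  simp only [← map_smul, g.injective.eq_iff]

lemma exists_framePt_eq (P : PGPoint F) : ∃ v hv, P = framePt g v hv := by
  refine ⟨g.symm P.rep, by simpa using P.rep_nonzero, ?_⟩
  simp [framePt]

lemma exists_frameLine_eq (L : PGLine F) : ∃ c hc, L = frameLine g c hc := by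
  have hlt : L.val < ⊤ := by
    rw [lt_top_iff_ne_top]
    intro h0
    have := L.2
    rw [h0, finrank_top, Module.finrank_fin_fun] at this
    omega
  obtain ⟨f, hf, hle⟩ := Submodule.exists_le_ker_of_lt_top L.val hlt
  have hform : f = coordForm (fun i => f (g (Pi.single i 1))) ∘ₗ g.symm.toLinearMap := by
    have : f ∘ₗ g.toLinearMap = coordForm fun i => f (g (Pi.single i 1)) := by
      refine LinearMap.pi_ext' fun i => LinearMap.ext_ring ?_
      simp [coordForm, Pi.single_apply]
    rw [← this]
    ext
    simp
  have hc : (fun i => f (g (Pi.single i 1))) ≠ 0 := by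
    intro h0
    apply hf
    rw [hform, h0]
    ext
    simp [coordForm]
  refine ⟨_, hc, Subtype.ext ?_⟩
  have hker : (frameLine g _ hc).val = LinearMap.ker f := by
    conv_rhs => rw [hform]
    rfl
  refine Submodule.eq_of_le_of_finrank_eq (by rwa [hker]) ?_
  rw [L.2, (frameLine g _ hc).2]

/-- The point at infinity of slope `d`. -/
def slopePt (d : F) : PGPoint F := framePt g ![1, d, 0] (vec_ne_zero_of_coord_one _ 0 rfl)

/-- The point at infinity of the vertical lines. -/
def vertPt : PGPoint F := framePt g ![0, 1, 0] (vec_ne_zero_of_coord_one _ 1 rfl)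

/-- The affine point with the given coordinates. -/
def affPt (u : F × F) : PGPoint F :=
  framePt g ![u.1, u.2, 1] (vec_ne_zero_of_coord_one _ 2 rfl)

/-- The line at infinity. -/
def infLine : PGLine F := frameLine g ![0, 0, 1] (vec_ne_zero_of_coord_one _ 2 rfl)

/-- The vertical line with abscissa `t`. -/
def vertLine (t : F) : PGLine F := frameLine g ![1, 0, -t] (vec_ne_zero_of_coord_one _ 0 rfl)

/-- The affine line `y = d x + t`. -/
def slopeLine (d t : F) : PGLine F :=
  frameLine g ![-d, 1, -t] (vec_ne_zero_of_coord_one _ 1 rfl)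

lemma slopePt_infLine (d : F) : pgMem (slopePt g d) (infLine g) := by
  simp [slopePt, infLine, pgMem_framePt_frameLine]

lemma vertPt_infLine : pgMem (vertPt g) (infLine g) := by
  simp [vertPt, infLine, pgMem_framePt_frameLine]

lemma affPt_infLine (u : F × F) : ¬ pgMem (affPt g u) (infLine g) := by
  simp [affPt, infLine, pgMem_framePt_frameLine]

lemma slopePt_vertLine (d t : F) : ¬ pgMem (slopePt g d) (vertLine g t) := by
  simp [slopePt, vertLine, pgMem_framePt_frameLine]

lemma vertPt_vertLine (t : F) : pgMem (vertPt g) (vertLine g t) := by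
  simp [vertPt, vertLine, pgMem_framePt_frameLine]

lemma affPt_vertLine (u : F × F) (t : F) : pgMem (affPt g u) (vertLine g t) ↔ u.1 = t := by
  simp [affPt, vertLine, pgMem_framePt_frameLine, ← sub_eq_add_neg, sub_eq_zero]

lemma slopePt_slopeLine (d s t : F) : pgMem (slopePt g d) (slopeLine g s t) ↔ d = s := by
  simp [slopePt, slopeLine, pgMem_framePt_frameLine, neg_add_eq_zero, eq_comm]

lemma vertPt_slopeLine (s t : F) : ¬ pgMem (vertPt g) (slopeLine g s t) := by
  simp [vertPt, slopeLine, pgMem_framePt_frameLine]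

lemma affPt_slopeLine (u : F × F) (s t : F) :
    pgMem (affPt g u) (slopeLine g s t) ↔ u.2 - s * u.1 = t := by
  simp only [affPt, slopeLine, pgMem_framePt_frameLine]
  simp only [Matrix.cons_val_zero, Matrix.cons_val_one, Matrix.cons_val, one_mul, mul_one]
  constructor <;> intro h <;> linear_combination h

lemma slopePt_injective : Function.Injective (slopePt g) := by
  intro d d' h
  have := slopePt_slopeLine g d d' 0
  rw [h, slopePt_slopeLine] at this
  exact this.1 rfl

lemma affPt_injective : Function.Injective (affPt g) := by
  intro u u' h
  have h1 := affPt_vertLine g u u'.1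
  have h2 := affPt_slopeLine g u 0 u'.2
  rw [h, affPt_vertLine] at h1
  rw [h, affPt_slopeLine] at h2
  have h2 := h2.1 (by simp)
  exact Prod.ext (h1.1 rfl) (by simpa using h2)

lemma slopeLine_inj {s t s' t' : F} : slopeLine g s t = slopeLine g s' t' ↔ s = s' ∧ t = t' := by
  refine ⟨fun h => ?_, fun h => by rw [h.1, h.2]⟩
  have h1 := slopePt_slopeLine g s s t
  have h2 := affPt_slopeLine g (0, t) s t
  rw [h, slopePt_slopeLine] at h1
  rw [h, affPt_slopeLine] at h2
  exact ⟨h1.2 rfl, by simpa using h2⟩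

lemma vertLine_ne_slopeLine (t s t' : F) : vertLine g t ≠ slopeLine g s t' := fun h =>
  vertPt_slopeLine g s t' (h ▸ vertPt_vertLine g t)

lemma point_cases (P : PGPoint F) :
    (∃ d, P = slopePt g d) ∨ P = vertPt g ∨ ∃ u, P = affPt g u := by
  obtain ⟨v, hv, rfl⟩ := exists_framePt_eq g P
  by_cases h2 : v 2 = 0
  · by_cases h0 : v 0 = 0
    · refine Or.inr (Or.inl ((framePt_eq_iff g _ _).2 ⟨v 1, ?_⟩))
      funext i
      fin_cases i <;> simp [h0, h2]
    · refine Or.inl ⟨v 1 / v 0, (framePt_eq_iff g _ _).2 ⟨v 0, ?_⟩⟩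
      funext i
      fin_cases i <;> simp [h2, mul_div_cancel₀, h0]
  · refine Or.inr (Or.inr ⟨(v 0 / v 2, v 1 / v 2), (framePt_eq_iff g _ _).2 ⟨v 2, ?_⟩⟩)
    funext i
    fin_cases i <;> simp [mul_div_cancel₀, h2]

lemma frameLine_smul {c c' : Fin 3 → F} (hc : c ≠ 0) (hc' : c' ≠ 0) {k : F} (hk : k ≠ 0)
    (h : c = k • c') : frameLine g c hc = frameLine g c' hc' := by
  apply Subtype.ext
  ext w
  subst h
  simp [frameLine, coordForm_apply, mul_assoc, ← mul_add, hk]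

lemma line_cases (L : PGLine F) :
    L = infLine g ∨ (∃ t, L = vertLine g t) ∨ ∃ s t, L = slopeLine g s t := by
  obtain ⟨c, hc, rfl⟩ := exists_frameLine_eq g L
  by_cases h1 : c 1 = 0
  · by_cases h0 : c 0 = 0
    · have h2 : c 2 ≠ 0 := fun h2 => hc (by funext i; fin_cases i <;> simp [h0, h1, h2])
      refine Or.inl (frameLine_smul g _ _ h2 ?_)
      funext i
      fin_cases i <;> simp [h0, h1]
    · refine Or.inr (Or.inl ⟨-(c 2 / c 0), frameLine_smul g _ _ h0 ?_⟩)
      funext i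
      fin_cases i <;> simp [h1, mul_div_cancel₀, h0]
  · refine Or.inr (Or.inr ⟨-(c 0 / c 1), -(c 2 / c 1), frameLine_smul g _ _ h1 ?_⟩)
    funext i
    fin_cases i <;> simp [mul_div_cancel₀, h1]

/-- A frame adapted to two lines: the basis vectors lie on the first line only, on both lines, and
on the second line only. -/
lemma exists_frame {ℓ₁ ℓ₂ : PGLine F} {v₀ v₁ v₂ : Fin 3 → F} (h₀ : v₀ ∈ ℓ₁.val)
    (h₀' : v₀ ∉ ℓ₂.val) (h₁ : v₁ ∈ ℓ₁.val) (h₁' : v₁ ∈ ℓ₂.val) (h₁0 : v₁ ≠ 0) (h₂ : v₂ ∈ ℓ₂.val)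
    (h₂' : v₂ ∉ ℓ₁.val) : ∃ g : (Fin 3 → F) ≃ₗ[F] (Fin 3 → F),
      (∀ x, g x = x 0 • v₀ + x 1 • v₁ + x 2 • v₂) ∧ ℓ₁ = infLine g ∧ ℓ₂ = vertLine g 0 := by
  let f : (Fin 3 → F) →ₗ[F] (Fin 3 → F) :=
    (LinearMap.proj 0).smulRight v₀ + (LinearMap.proj 1).smulRight v₁ +
      (LinearMap.proj 2).smulRight v₂
  have hf : ∀ x, f x = x 0 • v₀ + x 1 • v₁ + x 2 • v₂ := fun x => by simp [f]
  have hℓ₁ : ∀ x, f x ∈ ℓ₁.val ↔ x 2 = 0 := by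
    intro x
    rw [hf, Submodule.add_mem_iff_right _ (add_mem (Submodule.smul_mem _ _ h₀)
      (Submodule.smul_mem _ _ h₁))]
    refine ⟨fun h => ?_, fun h => by simp [h]⟩
    by_contra h0
    exact h₂' ((Submodule.smul_mem_iff _ h0).1 h)
  have hℓ₂ : ∀ x, f x ∈ ℓ₂.val ↔ x 0 = 0 := by
    intro x
    rw [hf, add_assoc, Submodule.add_mem_iff_left _ (add_mem (Submodule.smul_mem _ _ h₁')
      (Submodule.smul_mem _ _ h₂))]
    refine ⟨fun h => ?_, fun h => by simp [h]⟩
    by_contra h0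
    exact h₀' ((Submodule.smul_mem_iff _ h0).1 h)
  have hinj : Function.Injective f := by
    rw [injective_iff_map_eq_zero]
    intro x hx
    have h2 : x 2 = 0 := (hℓ₁ x).1 (hx ▸ zero_mem _)
    have h0 : x 0 = 0 := (hℓ₂ x).1 (hx ▸ zero_mem _)
    have h1 : x 1 = 0 := by
      rw [hf, h2, h0] at hx
      simpa [h₁0] using hx
    funext i
    fin_cases i <;> simp [h0, h1, h2]
  refine ⟨LinearEquiv.ofInjectiveEndo f hinj, fun x => ?_, Subtype.ext ?_, Subtype.ext ?_⟩
  · rw [LinearEquiv.coe_ofInjectiveEndo, hf]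
  · ext w
    obtain ⟨x, rfl⟩ := (LinearEquiv.ofInjectiveEndo f hinj).surjective w
    rw [LinearEquiv.coe_ofInjectiveEndo, hℓ₁, ← LinearEquiv.coe_ofInjectiveEndo f hinj]
    simp [infLine, frameLine, coordForm_apply, -LinearEquiv.coe_ofInjectiveEndo]
  · ext w
    obtain ⟨x, rfl⟩ := (LinearEquiv.ofInjectiveEndo f hinj).surjective w
    rw [LinearEquiv.coe_ofInjectiveEndo, hℓ₂, ← LinearEquiv.coe_ofInjectiveEndo f hinj]
    simp [vertLine, frameLine, coordForm_apply, -LinearEquiv.coe_ofInjectiveEndo]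

lemma exists_mem_notMem {ℓ₁ ℓ₂ : PGLine F} (h : ℓ₁ ≠ ℓ₂) : ∃ v ∈ ℓ₁.val, v ∉ ℓ₂.val := by
  by_contra! hle
  exact h (Subtype.ext (Submodule.eq_of_le_of_finrank_eq hle (ℓ₁.2.trans ℓ₂.2.symm)))

lemma exists_mem_inter (ℓ₁ ℓ₂ : PGLine F) : ∃ v ∈ ℓ₁.val, v ∈ ℓ₂.val ∧ v ≠ 0 := by
  have h := Submodule.finrank_sup_add_finrank_inf_eq ℓ₁.val ℓ₂.val
  have hle := Submodule.finrank_le (ℓ₁.val ⊔ ℓ₂.val)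
  rw [Module.finrank_fin_fun] at hle
  rw [ℓ₁.2, ℓ₂.2] at h
  have hne : ℓ₁.val ⊓ ℓ₂.val ≠ ⊥ := by
    intro h0
    rw [h0, finrank_bot] at h
    omega
  obtain ⟨v, hv, hv0⟩ := Submodule.exists_mem_ne_zero_of_ne_bot hne
  exact ⟨v, hv.1, hv.2, hv0⟩

end Coordinates

section SemiovalCoordinates

variable {F : Type*} [Field F]

lemma nsec_eq_one_iff {S : Set (PGPoint F)} {P : PGPoint F} {L : PGLine F} (hP : P ∈ S)
    (hPL : pgMem P L) : nsec S L = 1 ↔ ∀ Q ∈ S, pgMem Q L → Q = P := by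
  rw [nsec, Set.ncard_eq_one]
  constructor
  · rintro ⟨P', hP'⟩ Q hQ hQL
    have h1 : Q ∈ ({P'} : Set (PGPoint F)) := hP' ▸ ⟨hQ, hQL⟩
    have h2 : P ∈ ({P'} : Set (PGPoint F)) := hP' ▸ ⟨hP, hPL⟩
    exact h1.trans h2.symm
  · intro h
    refine ⟨P, Set.ext fun Q => ⟨fun hQ => h Q hQ.1 hQ.2, ?_⟩⟩
    rintro rfl
    exact ⟨hP, hPL⟩

lemma isSemioval.exists_tangent {S : Set (PGPoint F)} (hS : isSemioval S) {P : PGPoint F}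
    (hP : P ∈ S) : ∃ t₀, pgMem P t₀ ∧ nsec S t₀ = 1 ∧
      ∀ t, pgMem P t → (t ≠ t₀ ↔ ∃ Q ∈ S, pgMem Q t ∧ Q ≠ P) := by
  obtain ⟨t₀, ⟨hPt₀, ht₀⟩, huniq⟩ := hS P hP
  refine ⟨t₀, hPt₀, ht₀, fun t hPt => ?_⟩
  have hiff : t = t₀ ↔ nsec S t = 1 := ⟨fun h => h ▸ ht₀, fun h => huniq t ⟨hPt, h⟩⟩
  rw [Ne, hiff, nsec_eq_one_iff hP hPt]
  push Not
  rfl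

lemma slopePt_ne_affPt {g : (Fin 3 → F) ≃ₗ[F] (Fin 3 → F)} (d : F) (u : F × F) :
    slopePt g d ≠ affPt g u := fun h =>
  affPt_infLine g u (h ▸ slopePt_infLine g d)

variable [Fintype F] (g : (Fin 3 → F) ≃ₗ[F] (Fin 3 → F)) (S : Set (PGPoint F))

/-- The slopes of the points of `S` at infinity. -/
noncomputable def slopeSet : Finset F := (Set.toFinite {d | slopePt g d ∈ S}).toFinset

/-- The ordinates of the points of `S` with abscissa zero. -/
noncomputable def ordinateSet : Finset F := (Set.toFinite {b | affPt g (0, b) ∈ S}).toFinset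

/-- The affine points of `S` with nonzero abscissa. -/
noncomputable def offAxisSet : Finset (F × F) :=
  (Set.toFinite {u : F × F | u.1 ≠ 0 ∧ affPt g u ∈ S}).toFinset

variable {g S}

@[simp] lemma mem_slopeSet {d : F} : d ∈ slopeSet g S ↔ slopePt g d ∈ S := by simp [slopeSet]

@[simp] lemma mem_ordinateSet {b : F} : b ∈ ordinateSet g S ↔ affPt g (0, b) ∈ S := by
  simp [ordinateSet]

@[simp] lemma mem_offAxisSet {u : F × F} : u ∈ offAxisSet g S ↔ u.1 ≠ 0 ∧ affPt g u ∈ S := by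
  simp [offAxisSet]

/-- The affine points of `S` split into those on the vertical axis and the others. -/
lemma card_ordinateSet_add_card_offAxisSet {a : ℕ} (hsize : S.ncard = Fintype.card F - 1 + a)
    (h₁ : nsec S (infLine g) = a) :
    (ordinateSet g S).card + (offAxisSet g S).card + 1 = Fintype.card F := by
  classical
  have hq : 1 < Fintype.card F := Fintype.one_lt_card
  have hsplit := Set.ncard_inter_add_ncard_sdiff_eq_ncard S {P | pgMem P (infLine g)}
    (Set.toFinite S)
  have hdiff : S \ {P | pgMem P (infLine g)} = affPt g ''
      (((ordinateSet g S).image (fun b => ((0 : F), b)) ∪ offAxisSet g S : Finset (F × F)) :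
        Set (F × F)) := by
    ext P
    simp only [Set.mem_sdiff, Set.mem_ofPred_eq, Set.mem_image, Finset.mem_coe, Finset.mem_union,
      Finset.mem_image, mem_ordinateSet, mem_offAxisSet]
    constructor
    · rintro ⟨hP, hPL⟩
      rcases point_cases g P with ⟨d, rfl⟩ | rfl | ⟨u, rfl⟩
      · exact absurd (slopePt_infLine g d) hPL
      · exact absurd (vertPt_infLine g) hPL
      · refine ⟨u, ?_, rfl⟩
        by_cases hu : u.1 = 0
        · have huz : ((0 : F), u.2) = u := Prod.ext hu.symm rfl
          exact Or.inl ⟨u.2, by rwa [huz], huz⟩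
        · exact Or.inr ⟨hu, hP⟩
    · rintro ⟨u, ⟨b, hb, rfl⟩ | ⟨-, hu⟩, rfl⟩
      · exact ⟨hb, affPt_infLine g _⟩
      · exact ⟨hu, affPt_infLine g _⟩
  have hinter : (S ∩ {P | pgMem P (infLine g)}).ncard = a := h₁
  rw [hinter, hdiff, Set.ncard_image_of_injective _ (affPt_injective g), Set.ncard_coe_finset,
    Finset.card_union_of_disjoint, Finset.card_image_of_injective _ (Prod.mk_right_injective 0),
    hsize] at hsplit
  · omega
  · rw [Finset.disjoint_left]
    intro u hu huz
    obtain ⟨b, -, rfl⟩ := Finset.mem_image.1 hu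
    exact (mem_offAxisSet.1 huz).1 rfl

lemma vertPt_notMem {a : ℕ} (ha : 2 < a) (hS : isSemioval S)
    (hsize : S.ncard = Fintype.card F - 1 + a) (h₁ : nsec S (infLine g) = a)
    (h₂ : nsec S (vertLine g 0) = a) : vertPt g ∉ S := by
  classical
  intro hX
  have hcard := card_ordinateSet_add_card_offAxisSet hsize h₁
  obtain ⟨t₀, hXt₀, ht₀, htan⟩ := hS.exists_tangent hX
  rcases line_cases g t₀ with rfl | ⟨t₁, rfl⟩ | ⟨s, t, rfl⟩
  · omega
  · have hsurj : ∀ s, s ≠ t₁ ↔ ∃ i ∈ (ordinateSet g S).disjSum (offAxisSet g S),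
        Sum.elim (fun _ => 0) Prod.fst i = s := by
      intro s
      have h1 : s ≠ t₁ ↔ vertLine g s ≠ vertLine g t₁ := by
        rw [not_iff_not]
        refine ⟨fun h => h ▸ rfl, fun h => ?_⟩
        have := (affPt_vertLine g (s, 0) s).2 rfl
        rwa [h, affPt_vertLine] at this
      rw [h1, htan _ (vertPt_vertLine g s)]
      simp only [Finset.mem_disjSum]
      constructor
      · rintro ⟨Q, hQ, hQs, hQX⟩
        rcases point_cases g Q with ⟨d, rfl⟩ | rfl | ⟨u, rfl⟩
        · exact absurd hQs (slopePt_vertLine g d s)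
        · exact absurd rfl hQX
        · rw [affPt_vertLine] at hQs
          by_cases hu : u.1 = 0
          · refine ⟨Sum.inl u.2, Or.inl ⟨u.2, ?_, rfl⟩, hu.symm.trans hQs⟩
            rw [mem_ordinateSet]
            rwa [show ((0 : F), u.2) = u from Prod.ext hu.symm rfl]
          · exact ⟨Sum.inr u, Or.inr ⟨u, mem_offAxisSet.2 ⟨hu, hQ⟩, rfl⟩, hQs⟩
      · have hne : ∀ u, affPt g u ≠ vertPt g := fun u h =>
          affPt_infLine g u (h ▸ vertPt_infLine g)
        rintro ⟨i, ⟨b, hb, rfl⟩ | ⟨u, hu, rfl⟩, hs⟩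
        · exact ⟨_, mem_ordinateSet.1 hb, (affPt_vertLine g _ _).2 hs, hne _⟩
        · exact ⟨_, (mem_offAxisSet.1 hu).2, (affPt_vertLine g _ _).2 hs, hne _⟩
    have hinj := (injOn_of_surj_compl (by rw [Finset.card_disjSum, hcard]) hsurj).2
    have hle : (ordinateSet g S).card ≤ 1 := by
      rw [Finset.card_le_one]
      intro b hb b' hb'
      have := @hinj (Sum.inl b) (by simpa using hb) (Sum.inl b') (by simpa using hb') rfl
      simpa using this
    have hsub : {P ∈ S | pgMem P (vertLine g 0)} ⊆
        insert (vertPt g) ((fun b => affPt g (0, b)) '' (ordinateSet g S : Set F)) := by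
      rintro P ⟨hP, hPL⟩
      rcases point_cases g P with ⟨d, rfl⟩ | rfl | ⟨u, rfl⟩
      · exact absurd hPL (slopePt_vertLine g d 0)
      · exact Or.inl rfl
      · rw [affPt_vertLine] at hPL
        have huz : ((0 : F), u.2) = u := Prod.ext hPL.symm rfl
        exact Or.inr ⟨u.2, by simpa [huz] using hP, by simp [huz]⟩
    have h3 := Set.ncard_le_ncard hsub (Set.toFinite _)
    have h4 := Set.ncard_insert_le (vertPt g)
      ((fun b => affPt g (0, b)) '' (ordinateSet g S : Set F))
    have h5 := Set.ncard_image_le (f := fun b => affPt g (0, b))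
      (Set.toFinite (ordinateSet g S : Set F))
    rw [Set.ncard_coe_finset] at h5
    have h6 : {P ∈ S | pgMem P (vertLine g 0)}.ncard = a := h₂
    omega
  · exact vertPt_slopeLine g s t hXt₀

lemma card_slopeSet (hX : vertPt g ∉ S) : (slopeSet g S).card = nsec S (infLine g) := by
  rw [nsec, ← Set.ncard_coe_finset, ← Set.ncard_image_of_injective _ (slopePt_injective g)]
  congr 1
  ext P
  simp only [Set.mem_image, Finset.mem_coe, mem_slopeSet, Set.mem_ofPred_eq]
  constructor
  · rintro ⟨d, hd, rfl⟩
    exact ⟨hd, slopePt_infLine g d⟩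
  · rintro ⟨hP, hPL⟩
    rcases point_cases g P with ⟨d, rfl⟩ | rfl | ⟨u, rfl⟩
    · exact ⟨d, hP, rfl⟩
    · exact absurd hP hX
    · exact absurd hPL (affPt_infLine g u)

lemma card_ordinateSet (hX : vertPt g ∉ S) :
    (ordinateSet g S).card = nsec S (vertLine g 0) := by
  rw [nsec, ← Set.ncard_coe_finset,
    ← Set.ncard_image_of_injective _ ((affPt_injective g).comp (Prod.mk_right_injective (0 : F)))]
  congr 1
  ext P
  simp only [Set.mem_image, Finset.mem_coe, mem_ordinateSet, Set.mem_ofPred_eq, Function.comp]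
  constructor
  · rintro ⟨b, hb, rfl⟩
    exact ⟨hb, (affPt_vertLine g _ _).2 rfl⟩
  · rintro ⟨hP, hPL⟩
    rcases point_cases g P with ⟨d, rfl⟩ | rfl | ⟨u, rfl⟩
    · exact absurd hPL (slopePt_vertLine g d 0)
    · exact absurd hP hX
    · rw [affPt_vertLine] at hPL
      have huz : ((0 : F), u.2) = u := Prod.ext hPL.symm rfl
      exact ⟨u.2, by rwa [huz], by rw [huz]⟩

/-- The points of `S` on an affine line `y = s x + t`. -/
lemma exists_mem_slopeLine_iff (hX : vertPt g ∉ S) (s t : F) (P : PGPoint F) :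
    (∃ Q ∈ S, pgMem Q (slopeLine g s t) ∧ Q ≠ P) ↔
      (s ∈ slopeSet g S ∧ slopePt g s ≠ P) ∨ (t ∈ ordinateSet g S ∧ affPt g (0, t) ≠ P) ∨
        ∃ u ∈ offAxisSet g S, affPt g u ≠ P ∧ u.2 - s * u.1 = t := by
  simp only [mem_slopeSet, mem_ordinateSet, mem_offAxisSet]
  constructor
  · rintro ⟨Q, hQ, hQL, hQP⟩
    rcases point_cases g Q with ⟨d, rfl⟩ | rfl | ⟨u, rfl⟩
    · rw [slopePt_slopeLine] at hQL
      exact Or.inl (hQL ▸ ⟨hQ, hQP⟩)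
    · exact absurd hQ hX
    · rw [affPt_slopeLine] at hQL
      by_cases hu : u.1 = 0
      · have huz : ((0 : F), t) = u := Prod.ext hu.symm (by simp [← hQL, hu])
        exact Or.inr (Or.inl (huz ▸ ⟨hQ, hQP⟩))
      · exact Or.inr (Or.inr ⟨u, ⟨hu, hQ⟩, hQP, hQL⟩)
  · rintro (⟨hs, hP⟩ | ⟨ht, hP⟩ | ⟨u, ⟨-, hu⟩, hP, hut⟩)
    · exact ⟨_, hs, (slopePt_slopeLine g _ _ _).2 rfl, hP⟩
    · exact ⟨_, ht, (affPt_slopeLine g _ _ _).2 (by simp), hP⟩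
    · exact ⟨_, hu, (affPt_slopeLine g _ _ _).2 hut, hP⟩

/-- The coordinates of a semioval with two long secants form a `TwoSecantConfig`. -/
theorem exists_twoSecantConfig {a : ℕ} (ha : 2 < a) (hS : isSemioval S)
    (hsize : S.ncard = Fintype.card F - 1 + a) (h₁ : nsec S (infLine g) = a)
    (h₂ : nsec S (vertLine g 0) = a) {n k : Fin 3 → F} (hn : n ≠ 0) (hk : k ≠ 0)
    (hN₁ : ∀ P ∈ S, pgMem P (infLine g) → ∀ t : PGLine F, pgMem P t → nsec S t = 1 →
      pgMem (framePt g n hn) t)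
    (hN₂ : ∀ P ∈ S, pgMem P (vertLine g 0) → ∀ t : PGLine F, pgMem P t → nsec S t = 1 →
      pgMem (framePt g k hk) t) :
    n 2 ≠ 0 ∧ ∃ m : F → F, TwoSecantConfig a (slopeSet g S) (ordinateSet g S) (offAxisSet g S)
      (n 0 / n 2) (n 1 / n 2) m ∧ ∀ b ∈ ordinateSet g S, k 1 = m b * k 0 + b * k 2 := by
  classical
  have hX := vertPt_notMem ha hS hsize h₁ h₂
  have hcardT := card_ordinateSet_add_card_offAxisSet hsize h₁
  have hcardD := card_slopeSet hX
  have hcardB := card_ordinateSet hX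
  rw [h₁] at hcardD
  rw [h₂] at hcardB
  rw [hcardB] at hcardT
  have hD : ∀ d ∈ slopeSet g S, ∃ t₀, n 1 = d * n 0 + t₀ * n 2 ∧
      ∀ t, t ≠ t₀ ↔ (t ∈ ordinateSet g S ∨ ∃ u ∈ offAxisSet g S, u.2 - d * u.1 = t) := by
    intro d hd
    rw [mem_slopeSet] at hd
    obtain ⟨L, hPL, hL, htan⟩ := hS.exists_tangent hd
    have hNL := hN₁ _ hd (slopePt_infLine g d) L hPL hL
    rcases line_cases g L with rfl | ⟨t₁, rfl⟩ | ⟨s, t₀, rfl⟩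
    · omega
    · exact absurd hPL (slopePt_vertLine g d t₁)
    · rw [slopePt_slopeLine] at hPL
      subst hPL
      refine ⟨t₀, ?_, fun t => ?_⟩
      · rw [slopeLine, pgMem_framePt_frameLine] at hNL
        simp only [Matrix.cons_val_zero, Matrix.cons_val_one, Matrix.cons_val] at hNL
        linear_combination hNL
      · have := htan (slopeLine g d t) ((slopePt_slopeLine g _ _ _).2 rfl)
        rw [exists_mem_slopeLine_iff hX, Ne, slopeLine_inj] at this
        simpa [(slopePt_ne_affPt _ _).symm] using this
  have hB : ∀ b ∈ ordinateSet g S, ∃ s₀, k 1 = s₀ * k 0 + b * k 2 ∧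
      ∀ s, s ≠ s₀ ↔ (s ∈ slopeSet g S ∨ ∃ u ∈ offAxisSet g S, u.2 - s * u.1 = b) := by
    intro b hb
    rw [mem_ordinateSet] at hb
    obtain ⟨L, hPL, hL, htan⟩ := hS.exists_tangent hb
    have hNL := hN₂ _ hb ((affPt_vertLine g _ _).2 rfl) L hPL hL
    rcases line_cases g L with rfl | ⟨t₁, rfl⟩ | ⟨s₀, t, rfl⟩
    · exact absurd hPL (affPt_infLine g _)
    · rw [affPt_vertLine] at hPL
      subst hPL
      simp only at hL
      omega
    · rw [affPt_slopeLine] at hPL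
      have hbt : b = t := by simpa using hPL
      subst hbt
      refine ⟨s₀, ?_, fun s => ?_⟩
      · rw [slopeLine, pgMem_framePt_frameLine] at hNL
        simp only [Matrix.cons_val_zero, Matrix.cons_val_one, Matrix.cons_val] at hNL
        linear_combination hNL
      · have := htan (slopeLine g s b) ((affPt_slopeLine g _ _ _).2 (by simp))
        rw [exists_mem_slopeLine_iff hX, Ne, slopeLine_inj] at this
        have hne : ∀ u ∈ offAxisSet g S, affPt g u ≠ affPt g (0, b) := fun u hu h0 =>
          (mem_offAxisSet.1 hu).1 (congrArg Prod.fst (affPt_injective g h0))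
        rw [show s ≠ s₀ ↔ ¬(s = s₀ ∧ b = b) by simp, this]
        constructor
        · rintro (⟨hs, -⟩ | ⟨-, h0⟩ | ⟨u, hu, -, hub⟩)
          · exact Or.inl hs
          · exact absurd rfl h0
          · exact Or.inr ⟨u, hu, hub⟩
        · rintro (hs | ⟨u, hu, hub⟩)
          · exact Or.inl ⟨hs, slopePt_ne_affPt _ _⟩
          · exact Or.inr (Or.inr ⟨u, hu, hne u hu, hub⟩)
  have hT : ∀ R ∈ offAxisSet g S, ∃ o : Option F,
      (o ≠ none ↔ ∃ u ∈ offAxisSet g S, u ≠ R ∧ u.1 = R.1) ∧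
      ∀ s, (o ≠ some s ↔ (s ∈ slopeSet g S ∨ R.2 - s * R.1 ∈ ordinateSet g S ∨
        ∃ u ∈ offAxisSet g S, u ≠ R ∧ u.2 - s * u.1 = R.2 - s * R.1)) := by
    intro R hR
    obtain ⟨hR1, hRS⟩ := mem_offAxisSet.1 hR
    obtain ⟨L, hPL, hL, htan⟩ := hS.exists_tangent hRS
    have hvert : vertLine g R.1 ≠ L ↔ ∃ u ∈ offAxisSet g S, u ≠ R ∧ u.1 = R.1 := by
      rw [htan _ ((affPt_vertLine g _ _).2 rfl)]
      constructor
      · rintro ⟨Q, hQ, hQL, hQR⟩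
        rcases point_cases g Q with ⟨d, rfl⟩ | rfl | ⟨u, rfl⟩
        · exact absurd hQL (slopePt_vertLine g d _)
        · exact absurd hQ hX
        · rw [affPt_vertLine] at hQL
          exact ⟨u, mem_offAxisSet.2 ⟨hQL ▸ hR1, hQ⟩, fun h0 => hQR (h0 ▸ rfl), hQL⟩
      · rintro ⟨u, hu, huR, hux⟩
        exact ⟨_, (mem_offAxisSet.1 hu).2, (affPt_vertLine g _ _).2 hux,
          (affPt_injective g).ne huR⟩
    have hslope : ∀ s, slopeLine g s (R.2 - s * R.1) ≠ L ↔
        (s ∈ slopeSet g S ∨ R.2 - s * R.1 ∈ ordinateSet g S ∨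
          ∃ u ∈ offAxisSet g S, u ≠ R ∧ u.2 - s * u.1 = R.2 - s * R.1) := by
      intro s
      rw [htan _ ((affPt_slopeLine g _ _ _).2 rfl), exists_mem_slopeLine_iff hX]
      have h0 : affPt g (0, R.2 - s * R.1) ≠ affPt g R := fun h0 =>
        hR1 (congrArg Prod.fst (affPt_injective g h0)).symm
      simp only [ne_eq, slopePt_ne_affPt, not_false_eq_true, and_true, h0,
        (affPt_injective g).eq_iff]
    rcases line_cases g L with rfl | ⟨t₁, rfl⟩ | ⟨s₀, t, rfl⟩
    · exact absurd hPL (affPt_infLine g _)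
    · rw [affPt_vertLine] at hPL
      subst hPL
      refine ⟨none, by rw [← hvert]; simp, fun s => ?_⟩
      rw [← hslope]
      simpa using (vertLine_ne_slopeLine g _ _ _).symm
    · rw [affPt_slopeLine] at hPL
      subst hPL
      refine ⟨some s₀, ?_, fun s => ?_⟩
      · rw [← hvert]
        simpa using vertLine_ne_slopeLine g _ _ _
      · rw [← hslope, Ne, Ne, slopeLine_inj, Option.some_inj, not_iff_not]
        exact ⟨fun h0 => ⟨h0.symm, by rw [h0]⟩, fun h0 => h0.1.symm⟩
  have hn2 : n 2 ≠ 0 := by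
    intro h0
    obtain ⟨d, hd, d', hd', hdd⟩ := Finset.one_lt_card.1
      (show 1 < (slopeSet g S).card by omega)
    obtain ⟨t, ht, -⟩ := hD d hd
    obtain ⟨t', ht', -⟩ := hD d' hd'
    rw [h0] at ht ht'
    have hn0 : n 0 = 0 := by
      apply mul_left_cancel₀ (sub_ne_zero.2 hdd)
      linear_combination ht' - ht
    rw [hn0] at ht
    apply hn
    funext i
    fin_cases i
    · exact hn0
    · simpa using ht
    · exact h0
  choose! m hm hm' using hB
  refine ⟨hn2, m, ⟨ha, hcardD, hcardB, by omega, fun u hu => (mem_offAxisSet.1 hu).1, ?_,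
    fun b hb s => hm' b hb s, hT⟩, hm⟩
  intro d hd s
  obtain ⟨t₀, ht₀, h⟩ := hD d hd
  rw [← h s, show n 1 / n 2 - d * (n 0 / n 2) = t₀ by rw [ht₀]; field_simp; ring]

end SemiovalCoordinates

section AdaptedFrame

variable {F : Type*} [Field F] [Fintype F] {g : (Fin 3 → F) ≃ₗ[F] (Fin 3 → F)}
  {S : Set (PGPoint F)}

lemma mem_iff_of_vertPt_notMem (hX : vertPt g ∉ S) (P : PGPoint F) :
    P ∈ S ↔ (∃ d ∈ slopeSet g S, P = slopePt g d) ∨ (∃ b ∈ ordinateSet g S, P = affPt g (0, b)) ∨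
      ∃ u ∈ offAxisSet g S, P = affPt g u := by
  simp only [mem_slopeSet, mem_ordinateSet, mem_offAxisSet]
  constructor
  · intro hP
    rcases point_cases g P with ⟨d, rfl⟩ | rfl | ⟨u, rfl⟩
    · exact Or.inl ⟨d, hP, rfl⟩
    · exact absurd hP hX
    · by_cases hu : u.1 = 0
      · have huz : ((0 : F), u.2) = u := Prod.ext hu.symm rfl
        exact Or.inr (Or.inl ⟨u.2, by rwa [huz], by rw [huz]⟩)
      · exact Or.inr (Or.inr ⟨u, ⟨hu, hP⟩, rfl⟩)
  · rintro (⟨d, hd, rfl⟩ | ⟨b, hb, rfl⟩ | ⟨u, ⟨-, hu⟩, rfl⟩) <;> assumption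

/-- If all points of `S` off the two lines lie on the line joining the nuclei, then the tangents at
these points are vertical. -/
lemma pgMem_tangent_of_snd_eq_zero (hS : isSemioval S) (hX : vertPt g ∉ S)
    (hsnd : ∀ u ∈ offAxisSet g S, u.2 = 0) {P R : PGPoint F} (hP₁ : pgMem P (infLine g))
    (hP₂ : pgMem P (vertLine g 0)) (hR : R ∈ S) (hR₁ : ¬ pgMem R (infLine g))
    (hR₂ : ¬ pgMem R (vertLine g 0)) {t : PGLine F} (hRt : pgMem R t) (ht : nsec S t = 1) :
    pgMem P t := by
  have hPX : P = vertPt g := by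
    rcases point_cases g P with ⟨d, rfl⟩ | rfl | ⟨u, rfl⟩
    · exact absurd hP₂ (slopePt_vertLine g d 0)
    · rfl
    · exact absurd hP₁ (affPt_infLine g u)
  rcases point_cases g R with ⟨d, rfl⟩ | rfl | ⟨u, rfl⟩
  · exact absurd (slopePt_infLine g d) hR₁
  · exact absurd hR hX
  · rw [affPt_vertLine] at hR₂
    have hRv := (affPt_vertLine g u u.1).2 rfl
    have htan : nsec S (vertLine g u.1) = 1 := by
      rw [nsec_eq_one_iff hR hRv]
      intro Q hQ hQL
      rcases point_cases g Q with ⟨d, rfl⟩ | rfl | ⟨v, rfl⟩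
      · exact absurd hQL (slopePt_vertLine g d _)
      · exact absurd hQ hX
      · rw [affPt_vertLine] at hQL
        have h1 := hsnd u (mem_offAxisSet.2 ⟨hR₂, hR⟩)
        have h2 := hsnd v (mem_offAxisSet.2 ⟨hQL ▸ hR₂, hQ⟩)
        rw [show v = u from Prod.ext hQL (h2.trans h1.symm)]
    rw [(hS _ hR).unique ⟨hRt, ht⟩ ⟨hRv, htan⟩, hPX]
    exact vertPt_vertLine g _

lemma isSymmDiff_of_offAxisSet_eq_empty (hX : vertPt g ∉ S) (hT : offAxisSet g S = ∅)
    (hD : ∀ s, s ∈ slopeSet g S ↔ s ≠ 0) (hB : ∀ s, s ∈ ordinateSet g S ↔ s ≠ 0) :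
    isSymmDiffOfTwoLinesMinusTwoPoints S (infLine g) (vertLine g 0) := by
  refine ⟨fun h => slopePt_vertLine g 0 0 (h ▸ slopePt_infLine g 0), slopePt g 0, affPt g (0, 0),
    slopePt_infLine g 0, slopePt_vertLine g 0 0, (affPt_vertLine g _ _).2 rfl, affPt_infLine g _,
    ?_⟩
  ext P
  simp only [Set.mem_sdiff, Set.mem_union, Set.mem_ofPred_eq, Set.mem_insert_iff,
    Set.mem_singleton_iff, not_or]
  rcases point_cases g P with ⟨d, rfl⟩ | rfl | ⟨u, rfl⟩
  · simp only [← mem_slopeSet, hD, slopePt_infLine, slopePt_vertLine, slopePt_ne_affPt,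
      (slopePt_injective g).eq_iff]
    tauto
  · simp [hX, vertPt_infLine, vertPt_vertLine]
  · simp only [affPt_infLine, affPt_vertLine, (slopePt_ne_affPt _ _).symm,
      (affPt_injective g).eq_iff]
    by_cases hu : u.1 = 0
    · obtain ⟨x, y⟩ := u
      simp only at hu
      subst hu
      rw [← mem_ordinateSet, hB]
      simp
    · have : affPt g u ∉ S := fun h => by
        have := mem_offAxisSet.2 ⟨hu, h⟩
        simp [hT] at this
      simp [hu, this]

lemma projEquivalent_blokhuisSemioval (hX : vertPt g ∉ S) {α β : F} (hα : α ≠ 0) (hβ : β ≠ 0)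
    (hD : ∀ s, s ∈ slopeSet g S ↔ ¬ IsSquare (-(s * α / β)))
    (hB : ∀ s, s ∈ ordinateSet g S ↔ ¬ IsSquare (-(β / s)))
    (hT : ∀ u : F × F, u ∈ offAxisSet g S ↔ u.2 = 0 ∧ ¬ IsSquare (-(u.1 / α))) :
    projEquivalent (blokhuisSemioval F) S := by
  have hne : ∀ i, (![α, β, 1] : Fin 3 → F) i ≠ 0 := by
    intro i
    fin_cases i <;> simp [hα, hβ]
  let e : (Fin 3 → F) ≃ₗ[F] (Fin 3 → F) :=
    LinearEquiv.piCongrRight fun i => LinearEquiv.smulOfNeZero F F (![α, β, 1] i) (hne i)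
  have he : ∀ x, e x = ![α * x 0, β * x 1, x 2] := by
    intro x
    funext i
    fin_cases i <;> simp [e]
  have hmap : ∀ v hv, Projectivization.map (σ := RingHom.id F) (e.trans g).toLinearMap
      (e.trans g).injective (Projectivization.mk F v hv) =
        framePt g (e v) (by simpa using hv) := fun v hv => rfl
  have hs0 : ∀ s : F, ¬ IsSquare (-s) → s ≠ 0 := by
    rintro s hs rfl
    simp at hs
  have h0 : ∀ s : F, s ≠ 0 → ∀ hv, Projectivization.map (σ := RingHom.id F)
      (e.trans g).toLinearMap (e.trans g).injective (Projectivization.mk F ![0, 1, s] hv) =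
        affPt g (0, β / s) := by
    intro s hs hv
    rw [hmap, affPt, framePt_eq_iff]
    refine ⟨s, ?_⟩
    rw [he]
    funext i
    fin_cases i <;> simp [mul_div_cancel₀, hs]
  have h1 : ∀ s hv, Projectivization.map (σ := RingHom.id F)
      (e.trans g).toLinearMap (e.trans g).injective (Projectivization.mk F ![s, 0, 1] hv) =
        affPt g (α * s, 0) := by
    intro s hv
    rw [hmap, affPt, framePt_eq_iff]
    refine ⟨1, ?_⟩
    rw [he]
    funext i
    fin_cases i <;> simp
  have h2 : ∀ s hv, Projectivization.map (σ := RingHom.id F)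
      (e.trans g).toLinearMap (e.trans g).injective (Projectivization.mk F ![1, s, 0] hv) =
        slopePt g (β * s / α) := by
    intro s hv
    rw [hmap, slopePt, framePt_eq_iff]
    refine ⟨α, ?_⟩
    rw [he]
    funext i
    fin_cases i <;> simp [mul_div_cancel₀, hα]
  refine ⟨e.trans g, Set.ext fun P => ?_⟩
  rw [mem_iff_of_vertPt_notMem hX]
  constructor
  · rintro ⟨_, ⟨s, hs, rfl | rfl | rfl⟩, rfl⟩
    · refine Or.inr (Or.inl ⟨β / s, ?_, h0 s (hs0 s hs) _⟩)
      rwa [hB, div_div_cancel₀ hβ]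
    · refine Or.inr (Or.inr ⟨(α * s, 0), ?_, h1 s _⟩)
      rw [hT]
      exact ⟨rfl, by rwa [mul_div_cancel_left₀ _ hα]⟩
    · refine Or.inl ⟨β * s / α, ?_, h2 s _⟩
      rwa [hD, div_mul_cancel₀ _ hα, mul_div_cancel_left₀ _ hβ]
  · rintro (⟨d, hd, rfl⟩ | ⟨b, hb, rfl⟩ | ⟨u, hu, rfl⟩)
    · rw [hD] at hd
      refine ⟨_, ⟨d * α / β, hd, Or.inr (Or.inr rfl)⟩, ?_⟩
      rw [h2]
      congr 1
      field_simp
    · rw [hB] at hb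
      refine ⟨_, ⟨β / b, hb, Or.inl rfl⟩, ?_⟩
      rw [h0 _ (hs0 _ hb), div_div_cancel₀ hβ]
    · rw [hT] at hu
      refine ⟨_, ⟨u.1 / α, hu.2, Or.inr (Or.inl rfl)⟩, ?_⟩
      rw [h1, mul_div_cancel₀ _ hα]
      congr 1
      exact Prod.ext rfl hu.1.symm

end AdaptedFrame

/-- Let `S` be a semioval of size `q − 1 + a`, `a > 2`, in `PG(2,q)`, `q = p^h`, with two
`a`-secants `ℓ₁, ℓ₂` with nuclei `N₁, N₂`, and let `S' = S ∖ (ℓ₁ ∪ ℓ₂)`.  Then `N₁ ∈ ℓ₂`,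
`N₂ ∈ ℓ₁`, the tangents to `S` through the points of `S'` all pass through `ℓ₁ ∩ ℓ₂`, and
one of the following holds:
(1) `S` is the symmetric difference of `ℓ₁` and `ℓ₂` with one further point removed from
    both lines;
(2) `S` is projectively equivalent to the Blokhuis semioval;
(3) for each `R ∈ S'` there are at least three lines through `R` meeting `S` in at least
    three points, and `q ≤ a + 1 + (a − 2)²(a − 3)²/6`. -/
theorem stmt_8 {F : Type*} [Field F] [Fintype F] (p h q : ℕ) (hp : p.Prime) (hq : q = p ^ h)
    (hcard : Fintype.card F = q)
    (a : ℕ) (ha : 2 < a)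
    (S : Set (PGPoint F)) (hS : isSemioval S) (hsize : S.ncard = q - 1 + a)
    (ℓ₁ ℓ₂ : PGLine F) (hne : ℓ₁ ≠ ℓ₂) (h₁ : nsec S ℓ₁ = a) (h₂ : nsec S ℓ₂ = a)
    (N₁ N₂ : PGPoint F)
    (hN₁ : ∀ P ∈ S, pgMem P ℓ₁ → ∀ t : PGLine F, pgMem P t → nsec S t = 1 → pgMem N₁ t)
    (hN₂ : ∀ P ∈ S, pgMem P ℓ₂ → ∀ t : PGLine F, pgMem P t → nsec S t = 1 → pgMem N₂ t)
    (S' : Set (PGPoint F)) (hS' : S' = S \ ({P | pgMem P ℓ₁} ∪ {P | pgMem P ℓ₂})) :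
    pgMem N₁ ℓ₂ ∧ pgMem N₂ ℓ₁ ∧
    (∀ X : PGPoint F, pgMem X ℓ₁ → pgMem X ℓ₂ →
      ∀ R ∈ S', ∀ t : PGLine F, pgMem R t → nsec S t = 1 → pgMem X t) ∧
    (isSymmDiffOfTwoLinesMinusTwoPoints S ℓ₁ ℓ₂ ∨
     projEquivalent (blokhuisSemioval F) S ∨
     ((∀ R ∈ S', 3 ≤ {L : PGLine F | pgMem R L ∧ 3 ≤ nsec S L}.ncard) ∧
       (q : ℚ) ≤ (a : ℚ) + 1 + ((a : ℚ) - 2) ^ 2 * ((a : ℚ) - 3) ^ 2 / 6)) := by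
  subst hcard
  obtain ⟨v₁, hv₁, hv₁', hv₁0⟩ := exists_mem_inter ℓ₁ ℓ₂
  have nuclei_mem : (pgMem N₁ ℓ₂ ∧ ¬ pgMem N₁ ℓ₁) ∧ pgMem N₂ ℓ₁ ∧ ¬ pgMem N₂ ℓ₂ := by
    obtain ⟨v₀, hv₀, hv₀'⟩ := exists_mem_notMem hne
    obtain ⟨v₂, hv₂, hv₂'⟩ := exists_mem_notMem hne.symm
    obtain ⟨g, -, rfl, rfl⟩ := exists_frame hv₀ hv₀' hv₁ hv₁' hv₁0 hv₂ hv₂'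
    obtain ⟨n, hn, rfl⟩ := exists_framePt_eq g N₁
    obtain ⟨k, hk, rfl⟩ := exists_framePt_eq g N₂
    obtain ⟨hn2, m, hconf, hm⟩ := exists_twoSecantConfig ha hS hsize h₁ h₂ hn hk hN₁ hN₂
    obtain ⟨hn0, hconst⟩ := hconf.nuclei
    have hn0 : n 0 = 0 := (div_eq_zero_iff.1 hn0).resolve_right hn2
    obtain ⟨b, hb, b', hb', hbb⟩ := Finset.one_lt_card.1
      (show 1 < (ordinateSet g S).card by rw [hconf.cardB]; omega)
    have hk2 : k 2 = 0 := by
      apply mul_left_cancel₀ (sub_ne_zero.2 hbb)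
      linear_combination hm b' hb' - hm b hb - k 0 * hconst b hb b' hb'
    have hk0 : k 0 ≠ 0 := by
      intro hk0
      have hk1 := hm b hb
      rw [hk0, hk2] at hk1
      apply hk
      funext i
      fin_cases i
      · exact hk0
      · simpa using hk1
      · exact hk2
    simp [infLine, vertLine, pgMem_framePt_frameLine, hn0, hn2, hk0, hk2]
  obtain ⟨⟨hN₁ℓ₂, hN₁ℓ₁⟩, hN₂ℓ₁, hN₂ℓ₂⟩ := nuclei_mem
  refine ⟨hN₁ℓ₂, hN₂ℓ₁, ?_⟩
  have hrep : ∀ (P : PGPoint F) (L : PGLine F), pgMem P L ↔ P.rep ∈ L.val := fun P L => by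
    rw [pgMem, Projectivization.submodule_eq, Submodule.span_singleton_le_iff_mem]
  obtain ⟨g, hg, rfl, rfl⟩ := exists_frame ((hrep _ _).1 hN₂ℓ₁) (mt (hrep _ _).2 hN₂ℓ₂) hv₁ hv₁'
    hv₁0 ((hrep _ _).1 hN₁ℓ₂) (mt (hrep _ _).2 hN₁ℓ₁)
  have hN₁g : N₁ = framePt g ![0, 0, 1] (vec_ne_zero_of_coord_one _ 2 rfl) := by
    simp [framePt, hg]
  have hN₂g : N₂ = framePt g ![1, 0, 0] (vec_ne_zero_of_coord_one _ 0 rfl) := by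
    simp [framePt, hg]
  rw [hN₁g] at hN₁
  rw [hN₂g] at hN₂
  obtain ⟨-, m, hconf, hm⟩ := exists_twoSecantConfig ha hS hsize h₁ h₂ _ _ hN₁ hN₂
  have hX := vertPt_notMem ha hS hsize h₁ h₂
  simp only [Matrix.cons_val_zero, Matrix.cons_val_one, Matrix.cons_val, zero_div] at hconf hm
  have hm0 : ∀ b ∈ ordinateSet g S, m b = 0 := fun b hb => by simpa using (hm b hb).symm
  refine ⟨fun P hP₁ hP₂ R hR t hRt ht => ?_, ?_⟩
  · subst hS'
    obtain ⟨hRS, hRn⟩ := hR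
    exact pgMem_tangent_of_snd_eq_zero hS hX (fun u hu => hconf.snd_eq_zero hm0 hu) hP₁ hP₂ hRS
      (fun h => hRn (Or.inl h)) (fun h => hRn (Or.inr h)) hRt ht
  · rcases hconf.classification hm0 with ⟨hT, hD, hB⟩ | ⟨α, β, hα, hβ, hD, hB, hT⟩
    · exact Or.inl (isSymmDiff_of_offAxisSet_eq_empty hX hT hD hB)
    · exact Or.inr (Or.inl (projEquivalent_blokhuisSemioval hX hα hβ hD hB hT))
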